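/- arXiv:1403.7670 — 7 statements merged into one kernel-verified Lean document; each statement's English description precedes it below -/
import Mathlib

section
/- There is no square-complementary graph of girth 6. That is, if G is a finite simple graph whose girth equals 6, then the square of G is not isomorphic to the complement of G. -/
/-!
Let `far G` be the complement of the square of `G`. If `G` is square-complementary then `far G` is
isomorphic to `G`, so both graphs have no cycles of length 3, 4 or 5. Write `n` for the number of
vertices. Counting the vertices within distance 2 of each vertex gives
`∑ deg v * (deg v + 1) = n * (n - 1)` (`degree_identity`).

For an edge `uv`, the vertices far from neither end are those of `N(u) ∪ N(v)`. Hence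
`f v = deg v + deg_far v` satisfies `f u + f v = n + t`, where `t` is the number of vertices far
from both ends (`edge_identity`), and `t ≤ 1` since `far G` has no 4-cycle. If `t = 0` for some
edge, then `G` is bipartite (`bipartite_of_no_far`).

*Non-bipartite case.* Here `f u + f v = n + 1` on each edge, and since `G` is connected and not
bipartite, `f` is constant. The Cauchy-Schwarz inequality and `degree_identity` give
`(n - 3) * (n - 7) ≤ 0`, which leaves only `n = 7` with `G` 2-regular. This is impossible for a
graph that contains a 6-cycle (`nonbipartite_false`).

*Bipartite case.* Non-adjacent vertices on opposite sides are adjacent in `far G`. Fix a 6-cycle of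
`G`. The absence of short cycles in both `G` and `far G` shows that every vertex is adjacent to a
vertex of the 6-cycle (`exists_adj_x`) and that each side has at most one vertex off the 6-cycle
(`extra_y_unique`). The few remaining graphs, on 6, 7 or 8 vertices, violate `degree_identity`
(`bipartite_false`).
-/

open SimpleGraph

/-- The square of a simple graph: two distinct vertices are adjacent iff they are adjacent
in `G` or have a common neighbor in `G`. -/
def SimpleGraph.square {V : Type*} (G : SimpleGraph V) : SimpleGraph V :=
  SimpleGraph.fromRel (fun x y => G.Adj x y ∨ ∃ z, G.Adj x z ∧ G.Adj z y)

namespace Squco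

lemma bool_eq : ∀ {a b c : Bool}, a ≠ b → c ≠ b → a = c := by decide

lemma exists_third : ∀ i j : Fin 3, ∃ k, k ≠ i ∧ k ≠ j := by decide

lemma exists_others : ∀ i : Fin 3, ∃ k l, k ≠ i ∧ l ≠ i ∧ k ≠ l := by decide

/-! ### Short cycles and hexagons -/

/-- There are no cycles of length 3, 4 or 5. For length 5 closed walks are excluded, not only
cycles; given that there are no triangles this is the same thing. -/
structure NoShortCycle {V : Type*} (G : SimpleGraph V) : Prop where
  tri : ∀ a b c, G.Adj a b → G.Adj b c → G.Adj c a → False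
  quad : ∀ a b c d, G.Adj a b → G.Adj b c → G.Adj c d → G.Adj d a → a ≠ c → b ≠ d → False
  pent : ∀ a b c d e, G.Adj a b → G.Adj b c → G.Adj c d → G.Adj d e → G.Adj e a → False

lemma noShortCycle_of_egirth {V : Type*} {G : SimpleGraph V} (hg : G.egirth = 6) :
    NoShortCycle G := by
  have key : ∀ a (w : G.Walk a a), w.IsCycle → 6 ≤ w.length := by
    intro a w hw
    have := le_egirth.1 hg.ge a w hw
    exact_mod_cast this
  have tri : ∀ a b c, G.Adj a b → G.Adj b c → G.Adj c a → False := by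
    intro a b c h1 h2 h3
    have := key a (.cons h1 (.cons h2 (.cons h3 .nil))) (by
      have := h1.ne; have := h2.ne; have := h3.ne
      rw [Walk.cons_isCycle_iff]
      simp
      grind)
    simp at this
  refine ⟨tri, ?_, ?_⟩
  · intro a b c d h1 h2 h3 h4 hac hbd
    have := key a (.cons h1 (.cons h2 (.cons h3 (.cons h4 .nil)))) (by
      have := h1.ne; have := h2.ne; have := h3.ne; have := h4.ne
      rw [Walk.cons_isCycle_iff]
      simp
      grind)
    simp at this
  · intro a b c d e h1 h2 h3 h4 h5
    have hac : a ≠ c := by rintro rfl; exact tri _ _ _ h3 h4 h5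
    have hbd : b ≠ d := by rintro rfl; exact tri _ _ _ h4 h5 h1
    have hce : c ≠ e := by rintro rfl; exact tri _ _ _ h5 h1 h2
    have hda : d ≠ a := by rintro rfl; exact tri _ _ _ h1 h2 h3
    have heb : e ≠ b := by rintro rfl; exact tri _ _ _ h2 h3 h4
    have := key a (.cons h1 (.cons h2 (.cons h3 (.cons h4 (.cons h5 .nil))))) (by
      have := h1.ne; have := h2.ne; have := h3.ne; have := h4.ne; have := h5.ne
      rw [Walk.cons_isCycle_iff]
      simp
      grind)
    simp at this

/-- `x` and `y` are the two alternating triples of vertices of an induced 6-cycle, indexed so that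
`x i` and `y i` are opposite. Swapping `x` and `y` gives a hexagon again, so each statement about
the side of `y` also holds for the side of `x`. -/
structure Hexagon {V : Type*} (G : SimpleGraph V) (x y : Fin 3 → V) : Prop where
  inj_x : Function.Injective x
  inj_y : Function.Injective y
  adj_iff : ∀ i j, G.Adj (x i) (y j) ↔ i ≠ j

lemma Hexagon.symm {V : Type*} {G : SimpleGraph V} {x y : Fin 3 → V} (h : Hexagon G x y) :
    Hexagon G y x :=
  ⟨h.inj_y, h.inj_x, fun i j => by rw [G.adj_comm, h.adj_iff, ne_comm]⟩

lemma exists_hexagon {V : Type*} {G : SimpleGraph V} (hg : G.egirth = 6) :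
    ∃ x y, Hexagon G x y := by
  have hG := noShortCycle_of_egirth hg
  have hna : ¬ G.IsAcyclic := by
    rw [← egirth_eq_top, hg]; exact ENat.natCast_ne_top 6
  obtain ⟨a, w, hw, hl⟩ := exists_egirth_eq_length.2 hna
  have hl : w.length = 6 := by rw [hg] at hl; exact_mod_cast hl.symm
  have adj : ∀ i < 6, G.Adj (w.getVert i) (w.getVert (i + 1)) := fun i hi =>
    w.adj_getVert_succ (by omega)
  have h6 : w.getVert 6 = w.getVert 0 := by rw [← hl]; simp
  have inj : ∀ i j, i < 6 → j < 6 → w.getVert i = w.getVert j → i = j := by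
    intro i j hi hj h
    exact hw.getVert_injOn' (by simp [hl]; omega) (by simp [hl]; omega) h
  have e0 := adj 0 (by omega)
  have e1 := adj 1 (by omega)
  have e2 := adj 2 (by omega)
  have e3 := adj 3 (by omega)
  have e4 := adj 4 (by omega)
  have e5 := adj 5 (by omega)
  simp only [Nat.reduceAdd, h6, zero_add] at e0 e1 e2 e3 e4 e5
  have n02 : w.getVert 0 ≠ w.getVert 2 := fun h => absurd (inj _ _ (by omega) (by omega) h) (by omega)
  have n04 : w.getVert 0 ≠ w.getVert 4 := fun h => absurd (inj _ _ (by omega) (by omega) h) (by omega)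
  have n24 : w.getVert 2 ≠ w.getVert 4 := fun h => absurd (inj _ _ (by omega) (by omega) h) (by omega)
  have n13 : w.getVert 1 ≠ w.getVert 3 := fun h => absurd (inj _ _ (by omega) (by omega) h) (by omega)
  have n15 : w.getVert 1 ≠ w.getVert 5 := fun h => absurd (inj _ _ (by omega) (by omega) h) (by omega)
  have n35 : w.getVert 3 ≠ w.getVert 5 := fun h => absurd (inj _ _ (by omega) (by omega) h) (by omega)
  have d0 : ¬ G.Adj (w.getVert 0) (w.getVert 3) := fun h => hG.quad _ _ _ _ e0 e1 e2 h.symm n02 n13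
  have d1 : ¬ G.Adj (w.getVert 2) (w.getVert 5) := fun h => hG.quad _ _ _ _ e2 e3 e4 h.symm n24 n35
  have d2 : ¬ G.Adj (w.getVert 4) (w.getVert 1) := fun h =>
    hG.quad _ _ _ _ e4 e5 e0 h.symm n04.symm n15.symm
  refine ⟨![w.getVert 0, w.getVert 2, w.getVert 4], ![w.getVert 3, w.getVert 5, w.getVert 1],
    ?_, ?_, ?_⟩
  · intro i j h
    fin_cases i <;> fin_cases j <;> simp_all
  · intro i j h
    fin_cases i <;> fin_cases j <;> simp_all
  · intro i j
    fin_cases i <;> fin_cases j <;> simp [*, -Walk.getVert_zero, e1.symm, e3.symm, e5.symm]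

/-! ### The graph of far pairs -/

/-- The complement of the square of `G`: two vertices are adjacent when their distance in `G` is
at least 3. -/
abbrev far {V : Type*} (G : SimpleGraph V) : SimpleGraph V := G.squareᶜ

lemma far_adj {V : Type*} {G : SimpleGraph V} {u v : V} :
    (far G).Adj u v ↔ u ≠ v ∧ ¬ G.Adj u v ∧ ∀ z, G.Adj u z → ¬ G.Adj z v := by
  simp only [far, compl_adj, SimpleGraph.square, fromRel_adj]
  constructor
  · rintro ⟨h, h2⟩
    refine ⟨h, fun h3 => h2 ⟨h, .inl (.inl h3)⟩, fun z h3 h4 => h2 ⟨h, .inl (.inr ⟨z, h3, h4⟩)⟩⟩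
  · rintro ⟨h, h2, h3⟩
    refine ⟨h, ?_⟩
    rintro ⟨-, (h4 | ⟨z, h4, h5⟩) | (h4 | ⟨z, h4, h5⟩)⟩
    · exact h2 h4
    · exact h3 z h4 h5
    · exact h2 h4.symm
    · exact h3 z h5.symm h4.symm

/-- For a square-complementary graph `G`, the graph `far G` is a copy of `G`. -/
def farIso {V : Type*} {G : SimpleGraph V} (e : G.square ≃g Gᶜ) : far G ≃g G where
  toEquiv := e.toEquiv
  map_rel_iff' := by
    intro a b
    have h := e.map_rel_iff' (a := a) (b := b)
    have h2 : e.toEquiv a = e.toEquiv b ↔ a = b := e.toEquiv.injective.eq_iff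
    rw [compl_adj] at h
    rw [compl_adj, ← h]
    have : G.Adj (e.toEquiv a) (e.toEquiv b) → e.toEquiv a ≠ e.toEquiv b := fun h => h.ne
    tauto

section
variable {V : Type*} {G : SimpleGraph V} {x y : Fin 3 → V}

/-! ### Structure around a hexagon in the bipartite case -/

/-- In a bipartite graph, vertices on opposite sides are at odd distance, so they are far apart as
soon as they are not adjacent. -/
lemma far_of_color {c : V → Bool} (hc : ∀ u v, G.Adj u v → c u ≠ c v) {u v : V}
    (hne : c u ≠ c v) (h : ¬ G.Adj u v) : (far G).Adj u v := by
  rw [far_adj]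
  refine ⟨fun h => hne (h ▸ rfl), h, fun z h1 h2 => ?_⟩
  exact hne (bool_eq (hc _ _ h1) (hc _ _ h2).symm)

lemma exists_common_of_not_far {c : V → Bool} (hc : ∀ u v, G.Adj u v → c u ≠ c v) {u v : V}
    (heq : c u = c v) (hne : u ≠ v) (h : ¬ (far G).Adj u v) : ∃ z, G.Adj u z ∧ G.Adj z v := by
  by_contra! hcon
  exact h (far_adj.2 ⟨hne, fun h => hc _ _ h heq, hcon⟩)

lemma color_x {c : V → Bool} (hc : ∀ u v, G.Adj u v → c u ≠ c v) (h : Hexagon G x y) (i j) :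
    c (x i) ≠ c (y j) := by
  have : ∀ i j, i ≠ j → c (x i) ≠ c (y j) := fun i j hij => hc _ _ ((h.adj_iff i j).2 hij)
  obtain ⟨k, hki, hkj⟩ := exists_third i j
  obtain ⟨l, hlk, hlj⟩ := exists_third k j
  obtain ⟨m, hmi, hml⟩ := exists_third i l
  have h1 : c (x l) = c (x i) := by
    exact bool_eq (this l m hml.symm) (this i m hmi.symm)
  rw [← h1]
  exact this l j hlj

/-- A vertex off the hexagon has at most one neighbour among the `x i`, since any two of these
already have a common neighbour `y k`. -/
lemma x_unique (hG : NoShortCycle G) (h : Hexagon G x y) {v : V} (hv : ∀ j, v ≠ y j) {i j : Fin 3}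
    (hi : G.Adj (x i) v) (hj : G.Adj (x j) v) : i = j := by
  by_contra hij
  obtain ⟨k, hki, hkj⟩ := exists_third i j
  exact hG.quad (x i) v (x j) (y k) hi hj.symm ((h.adj_iff j k).2 hkj.symm)
    ((h.adj_iff i k).2 hki.symm).symm (h.inj_x.ne hij) (hv k)

/-- In the bipartite case each vertex `v` on the side of `y` is adjacent to some `x i`. Otherwise
`v` and `y 0` have a common neighbour `z` (else they form a triangle with `x 0` in `far G`), then
`z` and `x 0` are far apart, and `z, y 1, x 1, v, x 0` is a 5-cycle in `far G`. -/
lemma exists_adj_x (hG : NoShortCycle G) (hF : NoShortCycle (far G)) {c : V → Bool}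
    (hc : ∀ u v, G.Adj u v → c u ≠ c v) (h : Hexagon G x y) {v : V} (hv : c v = c (y 0)) :
    ∃ i, G.Adj (x i) v := by
  by_contra! hno
  have cx := color_x hc h
  have cy : ∀ j, c (y j) = c (y 0) := fun j => bool_eq (cx 0 j).symm (cx 0 0).symm
  have hvy : ∀ j, v ≠ y j := by
    rintro j rfl
    obtain ⟨i, hi, -⟩ := exists_third j j
    exact hno i ((h.adj_iff i j).2 hi)
  have fxv : ∀ i, (far G).Adj (x i) v := fun i => far_of_color hc (by rw [hv]; exact cx i 0) (hno i)
  have fxy : ∀ i, (far G).Adj (x i) (y i) := fun i =>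
    far_of_color hc (cx i i) (by simp [h.adj_iff])
  obtain ⟨z, hvz, hzy⟩ := exists_common_of_not_far hc hv (hvy 0)
    (fun h1 => hF.tri _ _ _ (fxv 0) h1 (fxy 0).symm)
  have hzx : ∀ i, z ≠ x i := by rintro i rfl; exact hno i hvz.symm
  have hz1 : ∀ j, j ≠ 0 → ¬ G.Adj z (y j) := by
    intro j hj h1
    exact hj (x_unique hG h.symm hzx h1.symm hzy.symm)
  have cz : c z ≠ c (y 0) := hc _ _ hzy
  have fzx : (far G).Adj z (x 0) := by
    rw [far_adj]
    refine ⟨hzx 0, fun h1 => hc _ _ h1 (bool_eq cz (cx 0 0)), fun u hzu hux => ?_⟩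
    have hux := hux.symm
    have huy : ∀ j, u ≠ y j := by
      rintro j rfl
      exact hz1 j (fun h0 => (h.adj_iff 0 j).1 hux h0.symm) hzu
    have cu : c u = c (y 0) := bool_eq (hc _ _ hzu).symm cz.symm
    have fu : ∀ i, i ≠ 0 → (far G).Adj (x i) u := fun i hi =>
      far_of_color hc (by rw [cu]; exact cx i 0) (fun h1 => hi (x_unique hG h huy h1 hux))
    -- `u` and `v` both miss `x 1` and `x 2`, which makes a 4-cycle in `far G`
    exact hF.quad (x 1) u (x 2) v (fu 1 (by decide)) (fu 2 (by decide)).symm (fxv 2) (fxv 1).symm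
      (h.inj_x.ne (by decide)) (by rintro rfl; exact hno 0 hux)
  exact hF.pent z (y 1) (x 1) v (x 0)
    (far_of_color hc (by rw [cy 1]; exact cz) (hz1 1 (by decide))) (fxy 1).symm (fxv 1)
    (fxv 0).symm fzx.symm

/-- In the bipartite case at most one vertex on the side of `y` lies off the hexagon. Two such
vertices `v`, `w` have unique neighbours `x i`, `x j`. If `i = j`, they form a 4-cycle in `far G`
with the other two `x k`. If `i ≠ j`, they have a common neighbour `z` off the hexagon, whose
neighbour `y l` must satisfy both `l = i` and `l = j` to avoid 4-cycles in `G`. -/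
lemma extra_y_unique (hG : NoShortCycle G) (hF : NoShortCycle (far G)) {c : V → Bool}
    (hc : ∀ u v, G.Adj u v → c u ≠ c v) (h : Hexagon G x y) {v w : V} (hv : c v = c (y 0))
    (hw : c w = c (y 0)) (hvy : ∀ j, v ≠ y j) (hwy : ∀ j, w ≠ y j) : v = w := by
  by_contra hne
  have cx := color_x hc h
  obtain ⟨i, hi⟩ := exists_adj_x hG hF hc h hv
  obtain ⟨j, hj⟩ := exists_adj_x hG hF hc h hw
  have fv : ∀ k, k ≠ i → (far G).Adj (x k) v := fun k hk =>
      far_of_color hc (by rw [hv]; exact cx k 0) (fun h1 => hk (x_unique hG h hvy h1 hi))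
  have fw : ∀ k, k ≠ j → (far G).Adj (x k) w := fun k hk =>
      far_of_color hc (by rw [hw]; exact cx k 0) (fun h1 => hk (x_unique hG h hwy h1 hj))
  by_cases hij : i = j
  · subst hij
    obtain ⟨k, l, hk, hl, hkl⟩ := exists_others i
    exact hF.quad _ _ _ _ (fv k hk) (fv l hl).symm (fw l hl) (fw k hk).symm (h.inj_x.ne hkl) hne
  · obtain ⟨k, hki, hkj⟩ := exists_third i j
    obtain ⟨z, hvz, hzw⟩ := exists_common_of_not_far hc (hv.trans hw.symm) hne
      (fun h1 => hF.tri _ _ _ (fv k hki) h1 (fw k hkj).symm)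
    have hzx : ∀ l, z ≠ x l := by
      rintro l rfl
      exact hij ((x_unique hG h hvy hvz.symm hi).symm.trans (x_unique hG h hwy hzw hj))
    have cz : c z = c (x 0) := bool_eq (hv ▸ (hc _ _ hvz).symm) (cx 0 0)
    obtain ⟨l, hl⟩ := exists_adj_x hG hF hc h.symm cz
    have hil : i = l := by
      by_contra hil
      exact hG.quad v z (y l) (x i) hvz hl.symm ((h.adj_iff i l).2 hil).symm hi (hvy l) (hzx i)
    have hjl : j = l := by
      by_contra hjl
      exact hG.quad w z (y l) (x j) hzw.symm hl.symm ((h.adj_iff j l).2 hjl).symm hj (hwy l) (hzx j)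
    exact hij (hil.trans hjl.symm)
end

/-! ### Degree counts -/

open Classical in
/-- As `G` has no 3- or 4-cycles, exactly `∑ v ∈ N(u), deg v` vertices other than `u` are within
distance 2 of `u`: each neighbour `v` accounts for itself and for `N(v) \ {u}`. -/
lemma far_degree_add {V : Type*} [Fintype V] {G : SimpleGraph V} (hG : NoShortCycle G) (u : V) :
    (far G).degree u + ∑ v ∈ G.neighborFinset u, G.degree v + 1 = Fintype.card V := by
  have hdisj : Set.PairwiseDisjoint (G.neighborFinset u : Set V)
      (fun v => insert v ((G.neighborFinset v).erase u)) := by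
    intro v hv w hw hvw
    simp only [coe_neighborFinset, mem_neighborSet] at hv hw
    simp only [Function.onFun]
    rw [Finset.disjoint_left]
    intro a ha hb
    simp only [Finset.mem_insert, Finset.mem_erase, mem_neighborFinset] at ha hb
    rcases ha with rfl | ⟨hau, ha⟩ <;> rcases hb with rfl | ⟨hbu, hb⟩
    · exact hvw rfl
    · exact hG.tri _ _ _ hv hb.symm hw.symm
    · exact hG.tri _ _ _ hv ha hw.symm
    · exact hG.quad _ _ _ _ hv ha hb.symm hw.symm hau.symm hvw
  have hcard : ∑ v ∈ G.neighborFinset u, G.degree v =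
      ((G.neighborFinset u).biUnion (fun v => insert v ((G.neighborFinset v).erase u))).card := by
    rw [Finset.card_biUnion hdisj]
    refine Finset.sum_congr rfl fun v hv => ?_
    rw [mem_neighborFinset] at hv
    have h1 : u ∈ G.neighborFinset v := by simpa using hv.symm
    rw [Finset.card_insert_of_notMem (by simp), Finset.card_erase_of_mem h1]
    have := Finset.card_pos.2 ⟨u, h1⟩
    rw [card_neighborFinset_eq_degree] at *
    omega
  have hset : (insert u ((far G).neighborFinset u))ᶜ =
      (G.neighborFinset u).biUnion (fun v => insert v ((G.neighborFinset v).erase u)) := by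
    ext w
    simp only [Finset.mem_compl, Finset.mem_insert, mem_neighborFinset, far_adj,
      Finset.mem_biUnion, Finset.mem_erase]
    constructor
    · intro h
      push Not at h
      obtain ⟨h1, h2⟩ := h
      by_cases h3 : G.Adj u w
      · exact ⟨w, h3, .inl rfl⟩
      · obtain ⟨z, hz, hz2⟩ := h2 (Ne.symm h1) h3
        exact ⟨z, hz, .inr ⟨h1, hz2⟩⟩
    · rintro ⟨v, hv, rfl | ⟨h1, h2⟩⟩ (h3 | ⟨h3, h4, h5⟩)
      · exact hv.ne h3.symm
      · exact h4 hv
      · exact h1 h3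
      · exact h5 v hv h2
  have h2 := Finset.card_add_card_compl (insert u ((far G).neighborFinset u))
  rw [hset, ← hcard, Finset.card_insert_of_notMem (by simp), card_neighborFinset_eq_degree] at h2
  omega

open Classical in
lemma degree_identity {V : Type*} [Fintype V] {G : SimpleGraph V} (hG : NoShortCycle G)
    (e : far G ≃g G) :
    ∑ v, G.degree v * (G.degree v + 1) + Fintype.card V = Fintype.card V * Fintype.card V := by
  have h1 : ∑ u, ((far G).degree u + ∑ v ∈ G.neighborFinset u, G.degree v + 1) =
      Fintype.card V * Fintype.card V := by
    rw [Finset.sum_congr rfl fun u _ => far_degree_add hG u]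
    simp
  have h2 : ∑ u, (far G).degree u = ∑ u, G.degree u := by
    rw [← Equiv.sum_comp e.toEquiv (fun u => G.degree u)]
    exact Finset.sum_congr rfl fun u _ => (Iso.degree_eq e u).symm
  have h3 : ∑ u, ∑ v ∈ G.neighborFinset u, G.degree v = ∑ v, G.degree v * G.degree v := by
    rw [Finset.sum_comm' (t' := Finset.univ) (s' := fun v => G.neighborFinset v)
      (by intro a b; simp [G.adj_comm])]
    simp
  simp only [Finset.sum_add_distrib, mul_add, mul_one, h2, h3] at h1 ⊢
  simp only [Finset.sum_const, Finset.card_univ, smul_eq_mul, mul_one] at h1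
  omega

open Classical in
/-- For an edge `uv`, the vertices that are far from neither `u` nor `v` are exactly those of the
disjoint union `N(u) ∪ N(v)`, because there are no 3- or 5-cycles. -/
lemma edge_identity {V : Type*} [Fintype V] {G : SimpleGraph V} (hG : NoShortCycle G) {u v : V}
    (huv : G.Adj u v) :
    (G.degree u + (far G).degree u) + (G.degree v + (far G).degree v) = Fintype.card V +
      ((far G).neighborFinset u ∩ (far G).neighborFinset v).card := by
  have hset : ((far G).neighborFinset u ∪ (far G).neighborFinset v)ᶜ =
      G.neighborFinset u ∪ G.neighborFinset v := by
    ext w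
    simp only [Finset.mem_compl, Finset.mem_union, mem_neighborFinset, far_adj]
    constructor
    · intro h
      by_contra! hcon
      push Not at h
      have hu : u ≠ w := by rintro rfl; exact hcon.2 huv.symm
      have hv : v ≠ w := by rintro rfl; exact hcon.1 huv
      obtain ⟨z, hz, hz'⟩ := h.1 hu hcon.1
      obtain ⟨t, ht, ht'⟩ := h.2 hv hcon.2
      exact hG.pent _ _ _ _ _ hz hz' ht'.symm ht.symm huv.symm
    · rintro (h | h) (⟨h1, h2, h3⟩ | ⟨h1, h2, h3⟩)
      · exact h2 h
      · exact h3 u huv.symm h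
      · exact h3 v huv h
      · exact h2 h
  have hd : Disjoint (G.neighborFinset u) (G.neighborFinset v) := by
    rw [Finset.disjoint_left]
    intro a ha hb
    simp only [mem_neighborFinset] at ha hb
    exact hG.tri _ _ _ ha hb.symm huv.symm
  have h1 := Finset.card_add_card_compl ((far G).neighborFinset u ∪ (far G).neighborFinset v)
  rw [hset, Finset.card_union_of_disjoint hd] at h1
  have h2 := Finset.card_union_add_card_inter ((far G).neighborFinset u) ((far G).neighborFinset v)
  simp only [card_neighborFinset_eq_degree] at h1 h2
  omega

/-- If no vertex is far from both ends of an edge `uv`, then `G` is bipartite: the side of a vertex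
is decided by whether it can be reached from `u` or from `v` by a walk of length 2. -/
lemma bipartite_of_no_far {V : Type*} {G : SimpleGraph V} (hG : NoShortCycle G) {u v : V}
    (huv : G.Adj u v) (h : ∀ w, (far G).Adj u w → ¬ (far G).Adj v w) :
    ∃ c : V → Bool, ∀ a b, G.Adj a b → c a ≠ c b := by
  classical
  have cover : ∀ w, (∃ z, G.Adj u z ∧ G.Adj z w) ∨ (∃ z, G.Adj v z ∧ G.Adj z w) := by
    intro w
    by_contra! hcon
    refine h w (far_adj.2 ⟨?_, ?_, hcon.1⟩) (far_adj.2 ⟨?_, ?_, hcon.2⟩)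
    · rintro rfl; exact hcon.1 v huv huv.symm
    · exact hcon.2 u huv.symm
    · rintro rfl; exact hcon.2 u huv.symm huv
    · exact hcon.1 v huv
  have odd : ∀ t a b, G.Adj a b → (∃ z, G.Adj t z ∧ G.Adj z a) → (∃ z, G.Adj t z ∧ G.Adj z b) →
      False := by
    rintro t a b hab ⟨z, h1, h2⟩ ⟨z', h3, h4⟩
    exact hG.pent _ _ _ _ _ h1 h2 hab h4.symm h3.symm
  refine ⟨fun w => decide (∃ z, G.Adj u z ∧ G.Adj z w), fun a b hab heq => ?_⟩
  simp only [decide_eq_decide] at heq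
  by_cases ha : ∃ z, G.Adj u z ∧ G.Adj z a
  · exact odd u a b hab ha (heq.1 ha)
  · exact odd v a b hab ((cover a).resolve_left ha)
      ((cover b).resolve_left (fun hb => ha (heq.2 hb)))

/-! ### The bipartite case -/

/-- `degree_identity` for a bipartite graph given by an explicit incidence table `T`. -/
lemma bipartite_count {V I J : Type*} [Fintype V] [Fintype I] [Fintype J] {G : SimpleGraph V}
    (hG : NoShortCycle G) (e : far G ≃g G) {x : I → V} {y : J → V} (T : I → J → Bool)
    (hx : Function.Injective x) (hy : Function.Injective y) (hxy : ∀ i j, x i ≠ y j)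
    (hsurj : ∀ v, (∃ i, x i = v) ∨ ∃ j, y j = v)
    (hxx : ∀ i j, ¬ G.Adj (x i) (x j)) (hyy : ∀ i j, ¬ G.Adj (y i) (y j))
    (hT : ∀ i j, G.Adj (x i) (y j) ↔ T i j = true) :
    (∑ i, (∑ j, (T i j).toNat) * (∑ j, (T i j).toNat + 1) +
      ∑ j, (∑ i, (T i j).toNat) * (∑ i, (T i j).toNat + 1)) + (Fintype.card I + Fintype.card J) =
      (Fintype.card I + Fintype.card J) * (Fintype.card I + Fintype.card J) := by
  classical
  let E : I ⊕ J ≃ V := Equiv.ofBijective (Sum.elim x y) ⟨hx.sumElim hy hxy, fun v => by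
    rcases hsurj v with ⟨i, hi⟩ | ⟨j, hj⟩
    · exact ⟨.inl i, hi⟩
    · exact ⟨.inr j, hj⟩⟩
  have hEx : ∀ i, E (.inl i) = x i := fun _ => rfl
  have hEy : ∀ j, E (.inr j) = y j := fun _ => rfl
  have hdeg : ∀ v, G.degree v = ∑ w, if G.Adj v w then 1 else 0 := by
    intro v
    rw [← card_neighborFinset_eq_degree, neighborFinset_eq_filter, Finset.card_filter]
  have hdx : ∀ i, G.degree (x i) = ∑ j, (T i j).toNat := by
    intro i
    rw [hdeg, ← Equiv.sum_comp E, Fintype.sum_sum_type]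
    simp only [hEx, hEy, hxx, hT, if_false,
      Finset.sum_const_zero, zero_add]
    exact Finset.sum_congr rfl fun j _ => by cases T i j <;> rfl
  have hdy : ∀ j, G.degree (y j) = ∑ i, (T i j).toNat := by
    intro j
    rw [hdeg, ← Equiv.sum_comp E, Fintype.sum_sum_type]
    simp only [hEx, hEy, hyy, G.adj_comm (y j), hT,
      if_false, Finset.sum_const_zero, add_zero]
    exact Finset.sum_congr rfl fun i _ => by cases T i j <;> rfl
  have h := degree_identity hG e
  have hcard : Fintype.card V = Fintype.card I + Fintype.card J := by
    rw [← Fintype.card_congr E, Fintype.card_sum]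
  rw [← Equiv.sum_comp E, Fintype.sum_sum_type, hcard] at h
  have hdx' : ∀ i, G.degree (E (.inl i)) = ∑ j, (T i j).toNat := hdx
  have hdy' : ∀ j, G.degree (E (.inr j)) = ∑ i, (T i j).toNat := hdy
  simpa only [hdx', hdy'] using h

lemma injective_option {V : Type*} {x : Fin 3 → V} {z : V} (hx : Function.Injective x)
    (hz : ∀ i, z ≠ x i) : Function.Injective (fun o : Option (Fin 3) => o.elim z x) := by
  rintro (_ | i) (_ | j) h
  · rfl
  · exact absurd h (hz j)
  · exact absurd h.symm (hz i)
  · exact congrArg some (hx h)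

/-- The bipartite case in which `G` is a hexagon with one pendant vertex. -/
lemma one_extra_false {V : Type*} [Fintype V] {G : SimpleGraph V} {x y : Fin 3 → V}
    (hG : NoShortCycle G) (hF : NoShortCycle (far G)) (e : far G ≃g G) {c : V → Bool}
    (hc : ∀ u v, G.Adj u v → c u ≠ c v) (h : Hexagon G x y) {v : V} (hv : c v = c (y 0))
    (hvy : ∀ j, v ≠ y j) (hX : ∀ z, c z = c (x 0) → ∃ i, z = x i) : False := by
  have cx := color_x hc h
  have cy : ∀ j, c (y j) = c (y 0) := fun j => bool_eq (cx 0 j).symm (cx 0 0).symm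
  have cx' : ∀ i, c (x i) = c (x 0) := fun i => bool_eq (cx i 0) (cx 0 0)
  obtain ⟨k, hk⟩ := exists_adj_x hG hF hc h hv
  have hy' : ∀ o : Option (Fin 3), c (o.elim v y) = c (y 0) := by
    rintro (_ | j)
    · exact hv
    · exact cy j
  have := bipartite_count hG e (x := x) (y := fun o : Option (Fin 3) => o.elim v y)
    (fun i o => o.elim (decide (i = k)) (fun j => decide (i ≠ j))) h.inj_x
    (injective_option h.inj_y hvy)
    (fun i o heq => cx i 0 (by rw [← hy' o, heq]))
    (fun w => by
      by_cases hw : c w = c (x 0)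
      · obtain ⟨i, hi⟩ := hX w hw
        exact .inl ⟨i, hi.symm⟩
      · right
        have hw : c w = c (y 0) := bool_eq hw (cx 0 0).symm
        by_cases hwy : ∃ j, w = y j
        · obtain ⟨j, rfl⟩ := hwy
          exact ⟨some j, rfl⟩
        · push Not at hwy
          exact ⟨none, extra_y_unique hG hF hc h hv hw hvy hwy⟩)
    (fun i j hij => hc _ _ hij (by rw [cx', cx' j]))
    (fun i j hij => hc _ _ hij (by rw [hy', hy' j]))
    (by
      rintro i (_ | j)
      · simp only [Option.elim_none, decide_eq_true_eq]
        exact ⟨fun h1 => x_unique hG h hvy h1 hk, fun h1 => h1 ▸ hk⟩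
      · simp [h.adj_iff])
  clear * - this
  revert this
  decide +revert

/-- In the bipartite case `G` is a hexagon with at most one further vertex on each side. None of
these graphs satisfies `degree_identity`. -/
lemma bipartite_false {V : Type*} [Fintype V] {G : SimpleGraph V} {x y : Fin 3 → V}
    (hG : NoShortCycle G) (hF : NoShortCycle (far G)) (e : far G ≃g G) {c : V → Bool}
    (hc : ∀ u v, G.Adj u v → c u ≠ c v) (h : Hexagon G x y) : False := by
  classical
  have cx := color_x hc h
  have cy : ∀ j, c (y j) = c (y 0) := fun j => bool_eq (cx 0 j).symm (cx 0 0).symm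
  have cx' : ∀ i, c (x i) = c (x 0) := fun i => bool_eq (cx i 0) (cx 0 0)
  by_cases hX : ∀ z, c z = c (x 0) → ∃ i, z = x i
  · by_cases hY : ∀ v, c v = c (y 0) → ∃ j, v = y j
    · have := bipartite_count hG e (fun i j => decide (i ≠ j)) h.inj_x h.inj_y
        (fun i j heq => cx i j (by rw [heq]))
        (fun w => by
          by_cases hw : c w = c (x 0)
          · obtain ⟨i, hi⟩ := hX w hw
            exact .inl ⟨i, hi.symm⟩
          · obtain ⟨i, hi⟩ := hY w (bool_eq hw (cx 0 0).symm)
            exact .inr ⟨i, hi.symm⟩)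
        (fun i j hij => hc _ _ hij (by rw [cx', cx' j]))
        (fun i j hij => hc _ _ hij (by rw [cy, cy j]))
        (by simp [h.adj_iff])
      clear * - this
      revert this
      decide
    · push Not at hY
      obtain ⟨v, hv, hvy⟩ := hY
      exact one_extra_false hG hF e hc h hv hvy hX
  · push Not at hX
    obtain ⟨z, hz, hzx⟩ := hX
    by_cases hY : ∀ v, c v = c (y 0) → ∃ j, v = y j
    · exact one_extra_false hG hF e hc h.symm hz hzx hY
    · push Not at hY
      obtain ⟨v, hv, hvy⟩ := hY
      obtain ⟨k, hk⟩ := exists_adj_x hG hF hc h hv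
      obtain ⟨l, hl⟩ := exists_adj_x hG hF hc h.symm hz
      have hy' : ∀ o : Option (Fin 3), c (o.elim v y) = c (y 0) := by
        rintro (_ | j)
        · exact hv
        · exact cy j
      have hx' : ∀ o : Option (Fin 3), c (o.elim z x) = c (x 0) := by
        rintro (_ | j)
        · exact hz
        · exact cx' j
      have := bipartite_count hG e (x := fun o : Option (Fin 3) => o.elim z x)
        (y := fun o : Option (Fin 3) => o.elim v y)
        (fun o p => o.elim (p.elim (decide (G.Adj z v)) (fun j => decide (j = l)))
          (fun i => p.elim (decide (i = k)) (fun j => decide (i ≠ j))))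
        (injective_option h.inj_x hzx) (injective_option h.inj_y hvy)
        (fun o p heq => cx 0 0 (by rw [← hy' p, ← hx' o, heq]))
        (fun w => by
          by_cases hw : c w = c (x 0)
          · left
            by_cases hwx : ∃ j, w = x j
            · obtain ⟨j, rfl⟩ := hwx
              exact ⟨some j, rfl⟩
            · push Not at hwx
              exact ⟨none, extra_y_unique hG hF hc h.symm hz hw hzx hwx⟩
          · right
            have hw : c w = c (y 0) := bool_eq hw (cx 0 0).symm
            by_cases hwy : ∃ j, w = y j
            · obtain ⟨j, rfl⟩ := hwy
              exact ⟨some j, rfl⟩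
            · push Not at hwy
              exact ⟨none, extra_y_unique hG hF hc h hv hw hvy hwy⟩)
        (fun i j hij => hc _ _ hij (by rw [hx', hx' j]))
        (fun i j hij => hc _ _ hij (by rw [hy', hy' j]))
        (by
          rintro (_ | i) (_ | j)
          · simp
          · simp only [Option.elim_none, Option.elim_some, decide_eq_true_eq]
            exact ⟨fun h1 => x_unique hG h.symm hzx h1.symm hl, fun h1 => h1 ▸ hl.symm⟩
          · simp only [Option.elim_none, Option.elim_some, decide_eq_true_eq]
            exact ⟨fun h1 => x_unique hG h hvy h1 hk, fun h1 => h1 ▸ hk⟩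
          · simp [h.adj_iff])
      generalize decide (G.Adj z v) = b at this
      clear * - this
      revert this
      decide +revert

/-! ### The non-bipartite case -/

variable {V : Type*} {G : SimpleGraph V} {x y : Fin 3 → V}

lemma Hexagon.far_adj (hG : NoShortCycle G) (h : Hexagon G x y) (i : Fin 3) :
    (far G).Adj (x i) (y i) := by
  obtain ⟨k, l, hk, hl, hkl⟩ := exists_others i
  have e1 := (h.adj_iff k i).2 hk
  have e2 := (h.adj_iff k l).2 hkl
  have e3 := (h.adj_iff i l).2 hl.symm
  refine Squco.far_adj.2 ⟨fun heq => ?_, by simp [h.adj_iff], fun z h1 h2 => ?_⟩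
  · rw [heq] at e3
    exact hG.tri _ _ _ e1.symm e2 e3.symm
  · exact hG.pent _ _ _ _ _ h1 h2 e1.symm e2 e3.symm

lemma Hexagon.injective (hG : NoShortCycle G) (h : Hexagon G x y) :
    Function.Injective (Sum.elim x y) :=
  h.inj_x.sumElim h.inj_y fun i j => by
    by_cases hij : i = j
    · subst hij; exact (h.far_adj hG i).ne
    · exact ((h.adj_iff i j).2 hij).ne

/-- `G` is connected: a vertex unreachable from the hexagon would form a triangle in `far G`
with two opposite vertices of the hexagon. -/
lemma reachable (hG : NoShortCycle G) (hF : NoShortCycle (far G)) (h : Hexagon G x y) (v : V) :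
    G.Reachable (x 0) v := by
  by_contra hv
  have r : G.Reachable (x 0) (y 0) :=
    (((h.adj_iff 0 1).2 (by decide)).reachable.trans
      ((h.adj_iff 2 1).2 (by decide)).symm.reachable).trans
      ((h.adj_iff 2 0).2 (by decide)).reachable
  have key : ∀ u, G.Reachable (x 0) u → (far G).Adj u v := by
    intro u hu
    refine far_adj.2 ⟨?_, fun h1 => hv (hu.trans h1.reachable),
      fun z h1 h2 => hv ((hu.trans h1.reachable).trans h2.reachable)⟩
    rintro rfl
    exact hv hu
  exact hF.tri _ _ _ (h.far_adj hG 0) (key _ r) (key _ (.refl _)).symm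

/-- A 2-regular graph on 7 vertices has no hexagon: the seventh vertex would have no neighbour. -/
lemma regular_false [Fintype V] [DecidableRel G.Adj] (hG : NoShortCycle G) (h : Hexagon G x y)
    (hcard : Fintype.card V = 7) (hd : ∀ v, G.degree v = 2) : False := by
  classical
  have h6 : (Finset.univ.image (Sum.elim x y)).card = 6 := by
    rw [Finset.card_image_of_injective _ (h.injective hG)]; rfl
  have h1 : (Finset.univ.image (Sum.elim x y))ᶜ.card = 1 := by
    rw [Finset.card_compl, h6, hcard]
  obtain ⟨w, hw⟩ := Finset.card_eq_one.1 h1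
  have hw' : ∀ v, v = w ↔ (∀ i, x i ≠ v) ∧ ∀ j, y j ≠ v := by
    intro v
    rw [← Finset.mem_singleton, ← hw]
    simp
  obtain ⟨hwx, hwy⟩ := (hw' w).1 rfl
  -- a hexagon vertex already has two neighbours on the hexagon
  have noadj : ∀ (x y : Fin 3 → V), Hexagon G x y → (∀ j, y j ≠ w) → ∀ i, ¬ G.Adj (x i) w := by
    intro x y h hwy i hi
    obtain ⟨k, l, hk, hl, hkl⟩ := exists_others i
    have hsub : ({w, y k, y l} : Finset V) ⊆ G.neighborFinset (x i) := by
      intro a ha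
      simp only [Finset.mem_insert, Finset.mem_singleton] at ha
      rw [mem_neighborFinset]
      rcases ha with rfl | rfl | rfl
      · exact hi
      · exact (h.adj_iff i k).2 hk.symm
      · exact (h.adj_iff i l).2 hl.symm
    have := Finset.card_le_card hsub
    rw [card_neighborFinset_eq_degree, hd, Finset.card_insert_of_notMem, Finset.card_pair] at this
    · omega
    · exact h.inj_y.ne hkl
    · simp [(hwy k).symm, (hwy l).symm]
  have hpos : 0 < (G.neighborFinset w).card := by rw [card_neighborFinset_eq_degree, hd]; omega
  obtain ⟨v, hv⟩ := Finset.card_pos.1 hpos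
  rw [mem_neighborFinset] at hv
  refine hv.ne ((hw' v).2 ⟨?_, ?_⟩).symm
  · rintro i rfl
    exact noadj x y h hwy i hv.symm
  · rintro i rfl
    exact noadj y x h.symm hwx i hv.symm

open Classical in
/-- In the non-bipartite case `deg v + deg_far v` equals `(n + 1) / 2` for each vertex `v`. Then
`4 ∑ deg = n (n + 1)`, and comparing the sum of squares with `degree_identity` yields
`(n - 3) (n - 7) ≤ 0`, so `n = 7` and `G` is 2-regular. -/
lemma nonbipartite_false [Fintype V] (hG : NoShortCycle G) (hF : NoShortCycle (far G))
    (e : far G ≃g G) (h : Hexagon G x y)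
    (hnb : ¬ ∃ c : V → Bool, ∀ a b, G.Adj a b → c a ≠ c b) : False := by
  set n := Fintype.card V with hn
  let f : V → ℕ := fun v => G.degree v + (far G).degree v
  have hedge : ∀ u v, G.Adj u v → f u + f v = n + 1 := by
    intro u v huv
    have h1 := edge_identity hG huv
    have h2 : ((far G).neighborFinset u ∩ (far G).neighborFinset v).card ≤ 1 := by
      rw [Finset.card_le_one]
      intro a ha b hb
      simp only [Finset.mem_inter, mem_neighborFinset] at ha hb
      by_contra hab
      exact hF.quad _ _ _ _ ha.1 ha.2.symm hb.2 hb.1.symm huv.ne hab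
    have h3 : ((far G).neighborFinset u ∩ (far G).neighborFinset v).card ≠ 0 := by
      intro h0
      rw [Finset.card_eq_zero] at h0
      refine hnb (bipartite_of_no_far hG huv fun w hu hv => ?_)
      have : w ∈ (far G).neighborFinset u ∩ (far G).neighborFinset v := by simp [hu, hv]
      simp [h0] at this
    simp only [f]
    omega
  -- otherwise the sign of `2 * f v - (n + 1)` alternates along edges and is a 2-colouring
  obtain ⟨u, hu⟩ : ∃ u, 2 * f u = n + 1 := by
    by_contra! hne
    refine hnb ⟨fun v => decide (2 * f v < n + 1), fun a b hab heq => ?_⟩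
    have := hedge a b hab
    have := hne a
    have := hne b
    simp only [decide_eq_decide] at heq
    omega
  have hwalk : ∀ a b, G.Walk a b → 2 * f a = n + 1 → 2 * f b = n + 1 := by
    intro a b w
    induction w with
    | nil => exact id
    | cons hab _ ih =>
      intro ha
      have := hedge _ _ hab
      exact ih (by omega)
  have hf : ∀ v, 2 * f v = n + 1 := by
    intro v
    obtain ⟨w⟩ := (reachable hG hF h u).symm.trans (reachable hG hF h v)
    exact hwalk u v w hu
  have hid := degree_identity hG e
  have hs1 : ∑ v, (far G).degree v = ∑ v, G.degree v := by
    rw [← Equiv.sum_comp e.toEquiv (fun u => G.degree u)]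
    exact Finset.sum_congr rfl fun u _ => (Iso.degree_eq e u).symm
  have hs2 : ∑ v, (far G).degree v ^ 2 = ∑ v, G.degree v ^ 2 := by
    rw [← Equiv.sum_comp e.toEquiv (fun u => G.degree u ^ 2)]
    exact Finset.sum_congr rfl fun u _ => by rw [← Iso.degree_eq e u]; rfl
  have hD : 4 * ∑ v, G.degree v = n * (n + 1) := by
    have : ∑ v, 2 * f v = n * (n + 1) := by simp [hf, hn]
    rw [← this, ← Finset.mul_sum]
    simp only [f, Finset.sum_add_distrib, hs1]
    ring
  have hQ : ∑ v, G.degree v ^ 2 + ∑ v, G.degree v + n = n * n := by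
    rw [← hid, ← Finset.sum_add_distrib]
    congr 1
    exact Finset.sum_congr rfl fun v _ => by ring
  have hineq : n * (n + 1) ^ 2 ≤ 16 * ∑ v, G.degree v ^ 2 := by
    calc n * (n + 1) ^ 2 = ∑ v, (2 * f v) ^ 2 := by simp [hf, hn]
      _ ≤ ∑ v, (8 * G.degree v ^ 2 + 8 * (far G).degree v ^ 2) := by
        refine Finset.sum_le_sum fun v _ => ?_
        simp only [f]
        zify
        nlinarith [sq_nonneg ((G.degree v : ℤ) - (far G).degree v)]
      _ = _ := by
        rw [Finset.sum_add_distrib, ← Finset.mul_sum, ← Finset.mul_sum, hs2]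
        ring
  have hn6 : 6 ≤ n := by
    simpa using Fintype.card_le_of_injective _ (h.injective hG)
  have hn7 : n ≤ 7 := by
    by_contra! hlt
    have : n * (n + 1) ^ 2 + 4 * (n * (n + 1)) + 16 * n ≤ 16 * (n * n) := by omega
    have h8 : n * ((n + 1) ^ 2 + 4 * (n + 1) + 16) ≤ n * (16 * n) := by linarith
    have := Nat.le_of_mul_le_mul_left h8 (by omega)
    nlinarith
  -- `hu` makes `n` odd
  have hn : n = 7 := by omega
  rw [hn] at hD hQ
  refine regular_false hG h hn fun v => ?_
  have hz : ∑ v, ((G.degree v : ℤ) - 2) ^ 2 = 0 := by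
    have : ∀ v, ((G.degree v : ℤ) - 2) ^ 2 = (G.degree v : ℤ) ^ 2 - 4 * G.degree v + 4 := by
      intro v; ring
    simp only [this, Finset.sum_add_distrib, Finset.sum_sub_distrib, ← Finset.mul_sum]
    have h1 : (∑ v, (G.degree v : ℤ) ^ 2) = 28 := by exact_mod_cast (by omega)
    have h2 : (∑ v, (G.degree v : ℤ)) = 14 := by exact_mod_cast (by omega)
    rw [h1, h2]
    rw [Finset.sum_const, Finset.card_univ, show Fintype.card V = 7 from hn]
    norm_num
  rw [Finset.sum_eq_zero_iff_of_nonneg (fun v _ => sq_nonneg _)] at hz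
  have := hz v (Finset.mem_univ v)
  have := pow_eq_zero_iff (two_ne_zero) |>.1 this
  omega

end Squco

theorem no_squco_graph_of_girth_six {V : Type*} [Fintype V] (G : SimpleGraph V)
    (hg : G.egirth = 6) : ¬ Nonempty (G.square ≃g Gᶜ) := by
  rintro ⟨e⟩
  have e' := Squco.farIso e
  have hG := Squco.noShortCycle_of_egirth hg
  have hF := Squco.noShortCycle_of_egirth (e'.egirth_eq.trans hg)
  obtain ⟨x, y, h⟩ := Squco.exists_hexagon hg
  by_cases hb : ∃ c : V → Bool, ∀ a b, G.Adj a b → c a ≠ c b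
  · obtain ⟨c, hc⟩ := hb
    exact Squco.bipartite_false hG hF e' hc h
  · exact Squco.nonbipartite_false hG hF e' h hb
end

section
/- Every nontrivial square-complementary graph has radius 3: there exists a vertex whose eccentricity (the maximum distance from that vertex to any other vertex) equals 3, and every vertex has eccentricity at least 3. -/
/-!
Let `D` be the complement of `G.square`. A square-complementary graph `G` is connected, since
otherwise `Gᶜ` is connected and `G.square` is not. Hence `D` joins exactly the pairs of vertices at
distance at least `3` in `G`, and the hypothesis gives an isomorphism `φ` from `D` to `G`
(`adj_map_iff_three_le_dist`).

Every eccentricity is at least `3`: `G`, hence `D`, is connected with more than one vertex, so every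
vertex has a `D`-neighbour.

Some eccentricity is at most `3`: otherwise, as `D` is isomorphic to `G`, there are `x`, `y` at
distance at least `4` in `D`. Choose `z` and `w` with `G.dist x z ≥ 4` and `G.dist y w ≥ 4`. If
`G.dist z w ≥ 3`, then `x, z, w, y` is a walk of length `3` in `D`. Otherwise some `m` is within
distance `1` in `G` of both `z` and `w`, so it is at distance at least `3` from both `x` and `y`, and
`x, m, y` is a walk of length `2` in `D`. Both cases are absurd.
-/

open SimpleGraph

lemma square_adj_iff {V : Type*} (G : SimpleGraph V) (a b : V) :
    G.square.Adj a b ↔ a ≠ b ∧ (G.Adj a b ∨ ∃ z, G.Adj a z ∧ G.Adj z b) := by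
  simp only [SimpleGraph.square, SimpleGraph.fromRel_adj]
  refine and_congr_right fun _ => ⟨?_, Or.inl⟩
  rintro (h | h | ⟨z, h, h'⟩)
  · exact h
  · exact Or.inl h.symm
  · exact Or.inr ⟨z, h'.symm, h.symm⟩

lemma connected_of_connected_square {V : Type*} {G : SimpleGraph V}
    (h : G.square.Connected) : G.Connected := by
  have := h.nonempty
  refine ⟨fun u v => ?_⟩
  obtain ⟨p⟩ := h.preconnected u v
  induction p with
  | nil => rfl
  | cons hadj _ ih =>
    refine Reachable.trans ?_ ih
    obtain ⟨-, h | ⟨z, h, h'⟩⟩ := (square_adj_iff G _ _).1 hadj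
    · exact h.reachable
    · exact h.reachable.trans h'.reachable

lemma squco_connected {V : Type*} [Nonempty V] {G : SimpleGraph V}
    (e : G.square ≃g Gᶜ) : G.Connected := by
  rcases G.connected_or_connected_compl with h | h
  · exact h
  · exact connected_of_connected_square (e.connected_iff.2 h)

/-- Two vertices at distance at most `2` have a vertex within distance `1` of both. -/
lemma exists_middle_of_dist_lt_three {V : Type*} {G : SimpleGraph V} (hG : G.Connected)
    {a b : V} (h : G.dist a b < 3) : ∃ m, G.dist a m ≤ 1 ∧ G.dist m b ≤ 1 := by
  obtain ⟨p, hp⟩ := hG.exists_walk_length_eq_dist a b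
  rw [← hp] at h
  match p, h with
  | .nil, _ => exact ⟨a, by simp⟩
  | .cons hadj q, h =>
    refine ⟨_, (dist_eq_one_iff_adj.2 hadj).le, (dist_le q).trans ?_⟩
    simp only [Walk.length_cons] at h
    omega

lemma three_le_dist_iff {V : Type*} {G : SimpleGraph V} (hG : G.Connected) (a b : V) :
    3 ≤ G.dist a b ↔ a ≠ b ∧ ¬ G.square.Adj a b := by
  rw [square_adj_iff]
  constructor
  · intro h
    refine ⟨fun hab => by subst hab; simp at h, ?_⟩
    rintro ⟨-, hadj | ⟨z, h₁, h₂⟩⟩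
    · have := dist_eq_one_iff_adj.2 hadj
      omega
    · have := dist_le (Walk.cons h₁ (Walk.cons h₂ Walk.nil))
      simp only [Walk.length_cons, Walk.length_nil] at this
      omega
  · rintro ⟨hne, hns⟩
    by_contra hlt
    obtain ⟨m, h₁, h₂⟩ := exists_middle_of_dist_lt_three hG (not_le.1 hlt)
    have key : ∀ u v, G.dist u v ≤ 1 → u = v ∨ G.Adj u v := fun u v h => by
      rcases Nat.le_one_iff_eq_zero_or_eq_one.1 h with h | h
      · exact Or.inl (hG.dist_eq_zero_iff.1 h)
      · exact Or.inr (dist_eq_one_iff_adj.1 h)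
    apply hns
    refine ⟨hne, ?_⟩
    rcases key _ _ h₁ with rfl | h₁ <;> rcases key _ _ h₂ with rfl | h₂
    · exact absurd rfl hne
    · exact Or.inl h₂
    · exact Or.inl h₁
    · exact Or.inr ⟨m, h₁, h₂⟩

/-- The isomorphism from `G.square` to `Gᶜ` carries the graph of pairs at distance at least `3`
onto `G` itself. -/
lemma adj_map_iff_three_le_dist {V : Type*} {G : SimpleGraph V} (hG : G.Connected)
    (e : G.square ≃g Gᶜ) (a b : V) : G.Adj (e a) (e b) ↔ 3 ≤ G.dist a b := by
  rw [three_le_dist_iff hG, ← e.map_adj_iff, compl_adj]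
  constructor
  · intro h
    exact ⟨fun hab => h.ne (congrArg e hab), fun h' => h'.2 h⟩
  · rintro ⟨hne, h⟩
    by_contra hn
    exact h ⟨fun h' => hne (e.injective h'), hn⟩

theorem squco_radius_three {V : Type*} [Fintype V] [Nontrivial V] (G : SimpleGraph V)
    (hsq : Nonempty (G.square ≃g Gᶜ)) :
    (∃ v : V, (∀ u : V, G.dist v u ≤ 3) ∧ ∃ u : V, G.dist v u = 3) ∧
      ∀ v : V, ∃ u : V, 3 ≤ G.dist v u := by
  obtain ⟨e⟩ := hsq
  have hG : G.Connected := squco_connected e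
  have hadj := adj_map_iff_three_le_dist hG e
  have lower : ∀ v : V, ∃ u : V, 3 ≤ G.dist v u := fun v => by
    obtain ⟨u, hu⟩ := hG.preconnected.exists_adj_of_nontrivial (e v)
    obtain ⟨u, rfl⟩ := e.surjective u
    exact ⟨u, (hadj v u).1 hu⟩
  refine ⟨?_, lower⟩
  suffices h : ∃ v : V, ∀ u : V, G.dist v u ≤ 3 by
    obtain ⟨v, hv⟩ := h
    obtain ⟨u, hu⟩ := lower v
    exact ⟨v, hv, u, le_antisymm (hv u) hu⟩
  by_contra! far
  obtain ⟨x⟩ := hG.nonempty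
  -- The distance between `e x` and `e y` in `G` is the distance between `x` and `y` in `D`.
  obtain ⟨y, hxy⟩ := far (e x)
  obtain ⟨y, rfl⟩ := e.surjective y
  obtain ⟨z, hz⟩ := far x
  obtain ⟨w, hw⟩ := far y
  by_cases hzw : 3 ≤ G.dist z w
  · have hwy : 3 ≤ G.dist w y := by rw [dist_comm]; omega
    have := dist_le (Walk.cons ((hadj x z).2 (by omega))
      (Walk.cons ((hadj z w).2 hzw) (Walk.cons ((hadj w y).2 hwy) Walk.nil)))
    simp only [Walk.length_cons, Walk.length_nil] at this
    omega
  · obtain ⟨m, hzm, hmw⟩ := exists_middle_of_dist_lt_three hG (not_le.1 hzw)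
    have h₁ : G.dist x z ≤ G.dist x m + G.dist m z := hG.dist_triangle
    have h₂ : G.dist y w ≤ G.dist y m + G.dist m w := hG.dist_triangle
    rw [dist_comm (u := m)] at h₁
    rw [dist_comm (u := y) (v := m)] at h₂
    have := dist_le (Walk.cons ((hadj x m).2 (by omega))
      (Walk.cons ((hadj m y).2 (by omega)) Walk.nil))
    simp only [Walk.length_cons, Walk.length_nil] at this
    omega
end

section
/- Every nontrivial square-complementary graph G satisfies 3 ≤ diam(G) ≤ 4: the distance between any two vertices of G is at most 4, and there exist two vertices of G at distance exactly 3. -/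
/-!
Write `f : G² ≃g Gᶜ`. Taking complements, `f` is an isomorphism onto `G` from the graph `H` that
joins two vertices when no walk of length at most two in `G` connects them (`squco_adj_iff`).

Upper bound: if `dist u v ≥ 5`, then every vertex is `H`-adjacent to `u` or to `v`, and `u`, `v`
are `H`-adjacent. Hence `H` has diameter at most 3, and so has `G`, a contradiction.

Distance three: if no two vertices are at distance exactly 3, then reachable vertices are joined
by walks of length at most two (`exists_short_walk_of_reachable`), so `H`-adjacency means being in
different components of `G`. If `G` is disconnected, then `H` is connected, hence so is `G`, which
is absurd. If `G` is connected, then `H` has no edges, hence neither does `G`, which is impossible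
for a connected graph with at least two vertices.
-/

open SimpleGraph

theorem square_adj_iff_exists_walk {V : Type*} (G : SimpleGraph V) {x y : V} (hxy : x ≠ y) :
    G.square.Adj x y ↔ ∃ p : G.Walk x y, p.length ≤ 2 := by
  simp only [SimpleGraph.square, SimpleGraph.fromRel_adj]
  constructor
  · rintro ⟨-, (h | ⟨z, h, h'⟩) | (h | ⟨z, h, h'⟩)⟩
    · exact ⟨.cons h .nil, by simp⟩
    · exact ⟨.cons h (.cons h' .nil), by simp⟩
    · exact ⟨.cons h.symm .nil, by simp⟩
    · exact ⟨.cons h'.symm (.cons h.symm .nil), by simp⟩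
  · rintro ⟨p, hp⟩
    refine ⟨hxy, Or.inl ?_⟩
    match p, hp with
    | .nil, _ => exact absurd rfl hxy
    | .cons h .nil, _ => exact Or.inl h
    | .cons h (.cons h' .nil), _ => exact Or.inr ⟨_, h, h'⟩
    | .cons _ (.cons _ (.cons _ _)), hp => simp at hp

/-- An isomorphism `f : G² ≃g Gᶜ` identifies the edges of `G` with the pairs of vertices that are
more than two steps apart. -/
theorem squco_adj_iff {V : Type*} {G : SimpleGraph V} (f : G.square ≃g Gᶜ) (x y : V) :
    G.Adj (f x) (f y) ↔ ¬ ∃ p : G.Walk x y, p.length ≤ 2 := by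
  by_cases hxy : x = y
  · subst hxy
    simp only [SimpleGraph.irrefl, false_iff, not_not]
    exact ⟨.nil, by simp⟩
  · have hf : f x ≠ f y := fun h => hxy (f.injective h)
    rw [← square_adj_iff_exists_walk G hxy, ← f.map_adj_iff, SimpleGraph.compl_adj]
    tauto

/-- If no vertex is at distance exactly 3 from `u`, then breadth-first search from `u` never gets
past distance 2. -/
theorem exists_short_walk_of_reachable {V : Type*} {G : SimpleGraph V} {u : V}
    (h3 : ∀ v, G.dist u v ≠ 3) {v : V} (h : G.Reachable u v) :
    ∃ p : G.Walk u v, p.length ≤ 2 := by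
  rw [SimpleGraph.reachable_iff_reflTransGen] at h
  induction h with
  | refl => exact ⟨.nil, by simp⟩
  | @tail b c _ hbc ih =>
    obtain ⟨p, hp⟩ := ih
    have hle := SimpleGraph.dist_le (p.concat hbc)
    rw [SimpleGraph.Walk.length_concat] at hle
    obtain ⟨q, hq⟩ := (p.concat hbc).reachable.exists_walk_length_eq_dist
    have := h3 c
    exact ⟨q, by omega⟩

theorem squco_dist_le_four {V : Type*} {G : SimpleGraph V} (f : G.square ≃g Gᶜ) (u v : V) :
    G.dist u v ≤ 4 := by
  by_contra! huv
  have hw : ∀ w, G.Adj (f w) (f u) ∨ G.Adj (f w) (f v) := by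
    intro w
    by_contra! h
    simp only [squco_adj_iff, not_not] at h
    obtain ⟨⟨p, hp⟩, q, hq⟩ := h
    have := SimpleGraph.dist_le (p.reverse.append q)
    simp only [SimpleGraph.Walk.length_append, SimpleGraph.Walk.length_reverse] at this
    omega
  have huv' : G.Adj (f u) (f v) := by simpa using hw u
  have key : ∀ x y, G.dist (f x) (f y) ≤ 3 := by
    intro x y
    rcases hw x with hx | hx <;> rcases hw y with hy | hy
    · exact (SimpleGraph.dist_le (.cons hx (.cons hy.symm .nil))).trans (by simp)
    · exact (SimpleGraph.dist_le (.cons hx (.cons huv' (.cons hy.symm .nil)))).trans (by simp)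
    · exact (SimpleGraph.dist_le (.cons hx (.cons huv'.symm (.cons hy.symm .nil)))).trans (by simp)
    · exact (SimpleGraph.dist_le (.cons hx (.cons hy.symm .nil))).trans (by simp)
  have := key (f.symm u) (f.symm v)
  simp only [RelIso.apply_symm_apply] at this
  omega

/-- If `G` were disconnected, the pairs of vertices in different components would form a connected
graph, and `f` maps these pairs to edges of `G`. -/
theorem squco_preconnected {V : Type*} {G : SimpleGraph V} (f : G.square ≃g Gᶜ) :
    G.Preconnected := by
  have hfar : ∀ x y, ¬ G.Reachable x y → G.Adj (f x) (f y) := fun x y h =>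
    (squco_adj_iff f x y).2 fun ⟨p, _⟩ => h p.reachable
  intro a b
  by_contra hab
  have hreach : ∀ w, G.Reachable (f a) (f w) := by
    intro w
    by_cases haw : G.Reachable a w
    · have hbw : ¬ G.Reachable b w := fun h => hab (haw.trans h.symm)
      exact (hfar a b hab).reachable.trans (hfar b w hbw).reachable
    · exact (hfar a w haw).reachable
  have ha := hreach (f.symm a)
  have hb := hreach (f.symm b)
  simp only [RelIso.apply_symm_apply] at ha hb
  exact hab (ha.symm.trans hb)

theorem squco_diam_between_three_and_four {V : Type*} [Fintype V] [Nontrivial V]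
    (G : SimpleGraph V) (hsq : Nonempty (G.square ≃g Gᶜ)) :
    (∀ u v : V, G.dist u v ≤ 4) ∧ ∃ u v : V, G.dist u v = 3 := by
  obtain ⟨f⟩ := hsq
  refine ⟨squco_dist_le_four f, ?_⟩
  by_contra! h3
  have hno : ∀ x y, ¬ G.Adj (f x) (f y) := fun x y h =>
    (squco_adj_iff f x y).1 h (exists_short_walk_of_reachable (h3 x) (squco_preconnected f x y))
  obtain ⟨x, y, hxy⟩ := exists_pair_ne V
  obtain ⟨p⟩ := squco_preconnected f x y
  cases p with
  | nil => exact hxy rfl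
  | @cons _ z _ h _ => exact hno (f.symm x) (f.symm z) (by simpa using h)
end

section
/- If G is a nontrivial square-complementary graph with girth at least 7, then G is isomorphic to the 7-cycle C₇. -/
/-!
Write `H` for the complement of `G²`, so `x` and `y` are `H`-adjacent when they are at distance at
least three in `G` (are far). The hypothesis says `H ≅ G`, hence `G` and `H` both have no cycle of
length 3, 4, 5 or 6.

* No vertex of `G` is isolated (`exists_adj`): an isolated vertex would be `H`-adjacent to all other
  vertices, while `H` would have an isolated vertex as well. Hence also no vertex is within distance
  two of all others (`exists_far`).
* A set of vertices pairwise at distance at most two lies in one closed neighbourhood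
  (`exists_center`), because all short cycles are excluded. As `H` is triangle-free, this applies
  to the set of vertices far from a given vertex.
* `G` has no leaf (`no_leaf`): if `ℓ` is a leaf at `a`, then all vertices outside `N[a]` are far
  from `ℓ`, so `V = N[a] ∪ N[x]` for some `x`. If `a` and `x` are within distance two, some vertex
  is within distance two of everything. Otherwise `a`, `x`, `ℓ` and a neighbour of `x` having no
  neighbour in `N(a)` form a 4-cycle of `H`; and if there is no such neighbour, then
  `N(x) = {v}` and the vertex joining `v` to `a` is within distance two of everything.
* No vertex has three neighbours (`no_three`): if `u ~ w, z₁, z₂` and `yᵢ ≠ u` is a further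
  neighbour of `zᵢ`, then `w, y₁, y₂` are pairwise far, a triangle of `H`.

So `G` and `H` are both 2-regular. Starting from a vertex `w` and walking three steps in both
directions gives seven distinct vertices, of which the last two are the two `H`-neighbours of `w`;
these seven vertices are therefore all of `V`, and the neighbourhoods close up to a 7-cycle.
-/

open SimpleGraph

namespace Squco

variable {V : Type*}

/-! ### Excluding short cycles -/

/-- The graph has no cycle of length 3, 4, 5 or 6, spelled out on vertices. Only those
distinctness conditions are listed that do not follow from adjacency. -/
structure NoShort (G : SimpleGraph V) : Prop where
  c3 : ∀ a b c, G.Adj a b → G.Adj b c → G.Adj c a → False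
  c4 : ∀ a b c d, G.Adj a b → G.Adj b c → G.Adj c d → G.Adj d a → a ≠ c → b ≠ d → False
  c5 : ∀ a b c d e, G.Adj a b → G.Adj b c → G.Adj c d → G.Adj d e → G.Adj e a →
    a ≠ c → a ≠ d → b ≠ d → b ≠ e → c ≠ e → False
  c6 : ∀ a b c d e f, G.Adj a b → G.Adj b c → G.Adj c d → G.Adj d e → G.Adj e f → G.Adj f a →
    a ≠ c → a ≠ d → a ≠ e → b ≠ d → b ≠ e → b ≠ f → c ≠ e → c ≠ f → d ≠ f → False

theorem noShort_of_egirth {G : SimpleGraph V} (hg : 7 ≤ G.egirth) : NoShort G := by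
  rw [SimpleGraph.le_egirth] at hg
  refine ⟨?_, ?_, ?_, ?_⟩
  · intro a b c h1 h2 h3
    have := hg a (.cons h1 (.cons h2 (.cons h3 .nil))) (by
      have := h1.ne; have := h2.ne; have := h3.ne
      simp [SimpleGraph.Walk.cons_isCycle_iff, SimpleGraph.Walk.cons_isPath_iff]
      grind)
    simp at this
    norm_cast at this
  · intro a b c d h1 h2 h3 h4 n1 n2
    have := hg a (.cons h1 (.cons h2 (.cons h3 (.cons h4 .nil)))) (by
      have := h1.ne; have := h2.ne; have := h3.ne; have := h4.ne
      simp [SimpleGraph.Walk.cons_isCycle_iff, SimpleGraph.Walk.cons_isPath_iff]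
      grind)
    simp at this
    norm_cast at this
  · intro a b c d e h1 h2 h3 h4 h5 n1 n2 n3 n4 n5
    have := hg a (.cons h1 (.cons h2 (.cons h3 (.cons h4 (.cons h5 .nil))))) (by
      have := h1.ne; have := h2.ne; have := h3.ne; have := h4.ne; have := h5.ne
      simp [SimpleGraph.Walk.cons_isCycle_iff, SimpleGraph.Walk.cons_isPath_iff]
      grind)
    simp at this
    norm_cast at this
  · intro a b c d e f h1 h2 h3 h4 h5 h6 n1 n2 n3 n4 n5 n6 n7 n8 n9
    have := hg a (.cons h1 (.cons h2 (.cons h3 (.cons h4 (.cons h5 (.cons h6 .nil)))))) (by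
      have := h1.ne; have := h2.ne; have := h3.ne; have := h4.ne; have := h5.ne; have := h6.ne
      simp [SimpleGraph.Walk.cons_isCycle_iff, SimpleGraph.Walk.cons_isPath_iff]
      grind)
    simp at this
    norm_cast at this

theorem NoShort.of_iso {W : Type*} {G : SimpleGraph V} {H : SimpleGraph W} (e : H ≃g G)
    (h : NoShort G) : NoShort H := by
  have A : ∀ {x y}, H.Adj x y → G.Adj (e x) (e y) := fun h => e.map_adj_iff.2 h
  have N : ∀ {x y}, x ≠ y → e x ≠ e y := fun h => e.injective.ne h
  refine ⟨?_, ?_, ?_, ?_⟩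
  · intro a b c h1 h2 h3
    exact h.c3 _ _ _ (A h1) (A h2) (A h3)
  · intro a b c d h1 h2 h3 h4 n1 n2
    exact h.c4 _ _ _ _ (A h1) (A h2) (A h3) (A h4) (N n1) (N n2)
  · intro a b c d e h1 h2 h3 h4 h5 n1 n2 n3 n4 n5
    exact h.c5 _ _ _ _ _ (A h1) (A h2) (A h3) (A h4) (A h5) (N n1) (N n2) (N n3) (N n4) (N n5)
  · intro a b c d e f h1 h2 h3 h4 h5 h6 n1 n2 n3 n4 n5 n6 n7 n8 n9
    exact h.c6 _ _ _ _ _ _ (A h1) (A h2) (A h3) (A h4) (A h5) (A h6) (N n1) (N n2) (N n3) (N n4)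
      (N n5) (N n6) (N n7) (N n8) (N n9)

/-! ### Vertices at distance at least three -/

/-- Adjacency in the complement of the square means distance at least three (possibly infinite). -/
theorem far_iff (G : SimpleGraph V) (x y : V) :
    G.squareᶜ.Adj x y ↔ x ≠ y ∧ ¬ G.Adj x y ∧ ∀ z, G.Adj x z → ¬ G.Adj z y := by
  simp only [SimpleGraph.compl_adj, SimpleGraph.square, SimpleGraph.fromRel_adj]
  have := G.adj_comm
  grind

/-- A set of vertices pairwise at distance at most two lies in a closed neighbourhood. -/
theorem exists_center {G : SimpleGraph V} (hG : NoShort G) (S : Set V) (hS : S.Nonempty)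
    (hclique : ∀ x ∈ S, ∀ y ∈ S, ¬ G.squareᶜ.Adj x y) : ∃ x, ∀ y ∈ S, y = x ∨ G.Adj x y := by
  obtain ⟨s, hs⟩ := hS
  by_cases hall : ∀ y ∈ S, y = s ∨ G.Adj s y
  · exact ⟨s, hall⟩
  push Not at hall
  obtain ⟨t, ht, hts, hst⟩ := hall
  have close : ∀ x ∈ S, ∀ y ∈ S, x ≠ y → ¬ G.Adj x y → ∃ z, G.Adj x z ∧ G.Adj z y := by
    intro x hx y hy hne hna
    have := hclique x hx y hy
    rw [far_iff] at this
    grind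
  obtain ⟨c, hsc, hct⟩ := close s hs t ht hts.symm hst
  refine ⟨c, fun r hr => ?_⟩
  by_contra! hcon
  obtain ⟨hrc, hcr⟩ := hcon
  have hrs : r ≠ s := by rintro rfl; exact hcr hsc.symm
  have hrt : r ≠ t := by rintro rfl; exact hcr hct
  by_cases h1 : G.Adj r s
  · by_cases h2 : G.Adj r t
    · exact hG.c4 r s c t h1 hsc hct h2.symm hrc hts.symm
    · obtain ⟨p, hp1, hp2⟩ := close r hr t ht hrt h2
      have := G.adj_comm
      exact hG.c5 r s c t p h1 hsc hct hp2.symm hp1.symm hrc hrt hts.symm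
        (by grind) (by grind)
  · obtain ⟨p, hp1, hp2⟩ := close r hr s hs hrs h1
    have := G.adj_comm
    by_cases h2 : G.Adj r t
    · exact hG.c5 r t c s p h2 hct.symm hsc.symm hp2.symm hp1.symm hrc hrs hts
        (by grind) (by grind)
    · obtain ⟨q, hq1, hq2⟩ := close r hr t ht hrt h2
      have hpq : p ≠ q := by
        rintro rfl
        exact hG.c4 p s c t hp2 hsc hct hq2.symm (by grind) hts.symm
      exact hG.c6 r p s c t q hp1 hp2 hsc hct hq2.symm hq1.symm hrs hrc hrt
        (by grind) (by grind) hpq hts.symm (by grind) (by grind)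

/-- The ends of a path of length three are far from each other. -/
theorem far_of_path {G : SimpleGraph V} (hG : NoShort G) {w u z y : V} (h1 : G.Adj w u)
    (h2 : G.Adj u z) (h3 : G.Adj z y) (hwz : w ≠ z) (huy : u ≠ y) : G.squareᶜ.Adj w y := by
  have comm := G.adj_comm
  have c3 := hG.c3
  rw [far_iff]
  refine ⟨?_, ?_, ?_⟩
  · rintro rfl
    exact hG.c3 w u z h1 h2 h3
  · intro h
    exact hG.c4 w u z y h1 h2 h3 h.symm hwz huy
  · intro p hp1 hp2
    exact hG.c5 w u z y p h1 h2 h3 hp2.symm hp1.symm hwz (by grind) huy (by grind) (by grind)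

/-! ### No leaves and no vertices of degree three -/

section

variable [Nontrivial V] {G : SimpleGraph V}

theorem exists_adj (e : G.squareᶜ ≃g G) (v : V) : ∃ u, G.Adj v u := by
  by_contra! hv
  -- `v` is far from every other vertex, and `e.symm v` is isolated in the far graph
  have h1 : ∀ u, u ≠ v → G.squareᶜ.Adj v u := fun u hu => by
    rw [far_iff]; grind
  have h2 : ∀ u, ¬ G.squareᶜ.Adj (e.symm v) u := fun u hu => by
    have := e.map_adj_iff.2 hu
    simp only [RelIso.apply_symm_apply] at this
    exact hv _ this
  by_cases h : e.symm v = v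
  · obtain ⟨u, hu⟩ := exists_ne v
    exact h2 u (by rw [h]; exact h1 u hu)
  · exact h2 v (h1 _ h).symm

theorem exists_far (e : G.squareᶜ ≃g G) (v : V) : ∃ u, G.squareᶜ.Adj v u := by
  obtain ⟨u, hu⟩ := exists_adj e (e v)
  refine ⟨e.symm u, e.map_adj_iff.1 ?_⟩
  simpa using hu

theorem no_leaf (hG : NoShort G) (e : G.squareᶜ ≃g G) (l a : V) (hla : G.Adj l a)
    (hleaf : ∀ b, G.Adj l b → b = a) : False := by
  have hH := hG.of_iso e
  have comm := G.adj_comm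
  obtain ⟨x, hx⟩ := exists_center hG {y | G.squareᶜ.Adj l y} (exists_far e l)
    (fun y hy z hz hyz => hH.c3 l y z hy hyz hz.symm)
  have cover : ∀ y, y = a ∨ G.Adj a y ∨ y = x ∨ G.Adj x y := by
    intro y
    by_cases hy : G.squareᶜ.Adj l y
    · have := hx y hy; tauto
    · rw [far_iff] at hy; grind
  have nocenter : ∀ c, ¬ ∀ y, y = c ∨ G.Adj c y ∨ ∃ z, G.Adj c z ∧ G.Adj z y := by
    intro c hc
    obtain ⟨y, hy⟩ := exists_far e c
    rw [far_iff] at hy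
    grind
  have hax : G.squareᶜ.Adj a x := by
    rw [far_iff]
    refine ⟨?_, ?_, ?_⟩
    · rintro rfl
      exact nocenter a (by grind)
    · intro h
      exact nocenter a (by grind)
    · intro c h1 h2
      exact nocenter c (by grind)
  have hax' := (far_iff G a x).1 hax
  have hlx : G.squareᶜ.Adj l x := by
    rw [far_iff]; grind
  have hd : ∀ d, G.Adj x d → ∃ u, G.Adj a u ∧ G.Adj u d := by
    intro d hxd
    by_contra! hno
    have h1 : G.squareᶜ.Adj d a := by
      rw [far_iff]; grind
    have h2 : G.squareᶜ.Adj l d := by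
      rw [far_iff]; grind
    exact hH.c4 a x l d hax hlx.symm h2 h1 hla.ne' hxd.ne
  obtain ⟨v, hxv⟩ := exists_adj e x
  obtain ⟨u, hau, huv⟩ := hd v hxv
  have huniq : ∀ d, G.Adj x d → d = v := by
    intro d hxd
    by_contra hne
    obtain ⟨u', hau', hud⟩ := hd d hxd
    by_cases huu : u = u'
    · subst huu
      exact hG.c4 u v x d huv hxv.symm hxd hud.symm (by grind) (Ne.symm hne)
    · exact hG.c6 a u v x d u' hau huv hxv.symm hxd hud.symm hau'.symm
        (by grind) (by grind) (by grind) (by grind) (by grind) huu (by grind) (by grind) (by grind)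
  exact nocenter u (by grind)

theorem exists_other (hG : NoShort G) (e : G.squareᶜ ≃g G) {v a : V} (h : G.Adj v a) :
    ∃ b, G.Adj v b ∧ b ≠ a := by
  by_contra! hcon
  exact no_leaf hG e v a h hcon

theorem no_three (hG : NoShort G) (e : G.squareᶜ ≃g G) {u w z z' : V} (h : G.Adj u w)
    (h1 : G.Adj u z) (h2 : G.Adj u z') (n1 : z ≠ w) (n2 : z' ≠ w) (n3 : z ≠ z') : False := by
  have comm := G.adj_comm
  have c3 := hG.c3
  obtain ⟨y, hy, hyu⟩ := exists_other hG e h1.symm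
  obtain ⟨y', hy', hyu'⟩ := exists_other hG e h2.symm
  have f1 := far_of_path hG h.symm h1 hy n1.symm hyu.symm
  have f2 := far_of_path hG h.symm h2 hy' n2.symm hyu'.symm
  have f3 : G.squareᶜ.Adj y y' := by
    rw [far_iff]
    refine ⟨?_, ?_, ?_⟩
    · rintro rfl
      exact hG.c4 u z y z' h1 hy hy'.symm h2.symm hyu.symm n3
    · intro hyy
      exact hG.c5 u z y y' z' h1 hy hyy hy'.symm h2.symm hyu.symm hyu'.symm
        (by grind) n3 (by grind)
    · intro p hp1 hp2
      have hpz : p ≠ z := by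
        rintro rfl
        exact hG.c4 u p y' z' h1 hp2 hy'.symm h2.symm hyu'.symm n3
      have hpz' : p ≠ z' := by
        rintro rfl
        exact hG.c4 u p y z h2 hp1.symm hy.symm h1.symm hyu.symm n3.symm
      have hyy : y ≠ y' := by
        rintro rfl
        exact hG.c4 u z y z' h1 hy hy'.symm h2.symm hyu.symm n3
      exact hG.c6 u z y p y' z' h1 hy hp1 hp2 hy'.symm h2.symm hyu.symm (by grind) hyu'.symm
        hpz.symm (by grind) n3 hyy (by grind) hpz'
  exact (hG.of_iso e).c3 w y y' f1 f3 f2.symm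

/-- Two distinct neighbours of a vertex are all its neighbours. -/
theorem nbr (hG : NoShort G) (e : G.squareᶜ ≃g G) {u a b : V} (ha : G.Adj u a) (hb : G.Adj u b)
    (hab : a ≠ b) (c : V) : G.Adj u c ↔ c = a ∨ c = b := by
  constructor
  · intro hc
    by_contra! hn
    exact no_three hG e ha hb hc hab.symm hn.1 hn.2.symm
  · rintro (rfl | rfl) <;> assumption

/-- The counterpart of `nbr` in the far graph, transported along `e`. -/
theorem nbr_far (hG : NoShort G) (e : G.squareᶜ ≃g G) {u a b : V} (ha : G.squareᶜ.Adj u a)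
    (hb : G.squareᶜ.Adj u b) (hab : a ≠ b) (c : V) (hc : G.squareᶜ.Adj u c) : c = a ∨ c = b := by
  have := (nbr hG e (e.map_adj_iff.2 ha) (e.map_adj_iff.2 hb) (e.injective.ne hab) (e c)).1
    (e.map_adj_iff.2 hc)
  simpa using this

/-! ### The 7-cycle -/

theorem iso_cycle (hG : NoShort G) (e : G.squareᶜ ≃g G) : Nonempty (G ≃g cycleGraph 7) := by
  have comm := G.adj_comm
  have irr := fun v => G.irrefl (v := v)
  obtain ⟨w, -, -⟩ := exists_pair_ne V
  obtain ⟨u, hu⟩ := exists_adj e w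
  obtain ⟨u', hu', huu⟩ := exists_other hG e hu
  obtain ⟨z, hz, hzw⟩ := exists_other hG e hu.symm
  obtain ⟨z', hz', hzw'⟩ := exists_other hG e hu'.symm
  obtain ⟨y, hy, hyu⟩ := exists_other hG e hz.symm
  obtain ⟨y', hy', hyu'⟩ := exists_other hG e hz'.symm
  have nw := nbr hG e hu hu' huu.symm
  have nu := nbr hG e hu.symm hz hzw.symm
  have nu' := nbr hG e hu'.symm hz' hzw'.symm
  have nz := nbr hG e hz.symm hy hyu.symm
  have nz' := nbr hG e hz'.symm hy' hyu'.symm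
  have f1 := far_of_path hG hu hz hy hzw.symm hyu.symm
  have f2 := far_of_path hG hu' hz' hy' hzw'.symm hyu'.symm
  have hzz : z ≠ z' := by
    rintro rfl
    exact hG.c4 w u z u' hu hz hz'.symm hu'.symm hzw.symm huu.symm
  have g1 := (far_iff G _ _).1 f1
  have g2 := (far_iff G _ _).1 f2
  have hyy : y ≠ y' := by
    rintro rfl
    exact hG.c6 w u z y z' u' hu hz hy hy'.symm hz'.symm hu'.symm hzw.symm g1.1 hzw'.symm
      hyu.symm (by grind) huu.symm hzz (by grind) (by grind)
  have all : ∀ v, v = w ∨ v = u ∨ v = u' ∨ v = z ∨ v = z' ∨ v = y ∨ v = y' := by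
    intro v
    by_cases hv : G.squareᶜ.Adj w v
    · have := nbr_far hG e f1 f2 hyy v hv
      tauto
    · rw [far_iff] at hv; grind
  obtain ⟨x, hx, hxz⟩ := exists_other hG e hy.symm
  have hxy : x = y' := by
    have := all x
    grind
  subst hxy
  have ny := nbr hG e hy.symm hx hxz.symm
  have ny' := nbr hG e hy'.symm hx.symm (by grind)
  -- the seven vertices in cyclic order
  let f : Fin 7 → V := ![w, u, z, y, x, z', u']
  have finj : Function.Injective f := by
    intro i j hij
    fin_cases i <;> fin_cases j <;> simp [f] at hij ⊢ <;> grind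
  have fsurj : Function.Surjective f := by
    intro v
    rcases all v with h | h | h | h | h | h | h
    exacts [⟨0, h.symm⟩, ⟨1, h.symm⟩, ⟨6, h.symm⟩, ⟨2, h.symm⟩, ⟨5, h.symm⟩, ⟨3, h.symm⟩,
      ⟨4, h.symm⟩]
  have hnbr : ∀ i v, G.Adj (f i) v ↔ v = f (i + 1) ∨ v = f (i - 1) := by
    intro i v
    fin_cases i
    exacts [nw v, (nu v).trans or_comm, (nz v).trans or_comm, (ny v).trans or_comm, ny' v,
      nz' v, nu' v]
  refine ⟨RelIso.symm ⟨Equiv.ofBijective f ⟨finj, fsurj⟩, ?_⟩⟩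
  intro i j
  change G.Adj (f i) (f j) ↔ _
  rw [hnbr, finj.eq_iff, finj.eq_iff,
    SimpleGraph.cycleGraph_adj]
  revert i j
  decide

end

end Squco

theorem squco_girth_ge_seven_is_C7 {V : Type*} [Fintype V] [Nontrivial V]
    (G : SimpleGraph V) (hsq : Nonempty (G.square ≃g Gᶜ)) (hg : 7 ≤ G.egirth) :
    Nonempty (G ≃g cycleGraph 7) := by
  obtain ⟨φ⟩ := hsq
  -- an isomorphism is also one between the complements, and `Gᶜᶜ = G`
  have e : G.squareᶜ ≃g G := ⟨φ.toEquiv, by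
    intro x y
    have h : (Gᶜ).Adj (φ x) (φ y) ↔ G.square.Adj x y := φ.map_adj_iff
    have hinj : φ x = φ y ↔ x = y := φ.injective.eq_iff
    rw [SimpleGraph.compl_adj] at h ⊢
    have := G.ne_of_adj (a := φ x) (b := φ y)
    change G.Adj (φ x) (φ y) ↔ _
    tauto⟩
  exact Squco.iso_cycle (Squco.noShort_of_egirth hg) e
end

section
/- The circulant graph on ℤ/41ℤ with connection set {±4, ±5, ±8, ±10} is square-complementary and contains a triangle (so it has girth 3); hence there exists a square-complementary graph of girth 3. -/
/-!
Write `J = {±4, ±5, ±8, ±10}`, so that `x ~ y` iff `x - y ∈ J`. In the square, `x` and `y` are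
adjacent iff `x - y` is nonzero and lies in `J ∪ (J + J)`; in the complement, iff `x - y` is nonzero
and lies outside `J`. Multiplication by the unit `7` of `ℤ/41ℤ` maps the first set of differences
onto the second (`seven_mul_notMem_jumps_iff`), hence is an isomorphism from the square to the
complement. Since `4 + 4 = 8`, the vertices `0, 4, 8` form a triangle, and no simple graph has
girth below `3`.
-/

open SimpleGraph

/-- The symmetric connection set `{±4, ±5, ±8, ±10}` of the circulant graph. -/
def jumps : Finset (ZMod 41) := {4, 5, 8, 10, -4, -5, -8, -10}

theorem circulant_adj_iff (x y : ZMod 41) :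
    (circulantGraph ({4, 5, 8, 10} : Set (ZMod 41))).Adj x y ↔ x - y ∈ jumps := by
  have key : ∀ d : ZMod 41, (d ≠ 0 ∧ ((d = 4 ∨ d = 5 ∨ d = 8 ∨ d = 10) ∨
      (-d = 4 ∨ -d = 5 ∨ -d = 8 ∨ -d = 10))) ↔ d ∈ jumps := by decide
  rw [← key, circulantGraph_adj, neg_sub, ne_eq, sub_eq_zero]
  rfl

theorem circulant_square_adj_iff (x y : ZMod 41) :
    (circulantGraph ({4, 5, 8, 10} : Set (ZMod 41))).square.Adj x y ↔
      x - y ≠ 0 ∧ (x - y ∈ jumps ∨ ∃ e ∈ jumps, x - y - e ∈ jumps) := by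
  have common : ∀ u v : ZMod 41, (∃ z, u - z ∈ jumps ∧ z - v ∈ jumps) ↔
      ∃ e ∈ jumps, u - v - e ∈ jumps := by
    intro u v
    constructor
    · rintro ⟨z, h₁, h₂⟩
      exact ⟨u - z, h₁, by convert h₂ using 1; ring⟩
    · rintro ⟨e, h₁, h₂⟩
      exact ⟨u - e, by convert h₁ using 1; ring, by convert h₂ using 1; ring⟩
  -- The relation underlying the square is already symmetric, so symmetrizing it changes nothing.
  have symm : ∀ d : ZMod 41, (-d ∈ jumps ∨ ∃ e ∈ jumps, -d - e ∈ jumps) ↔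
      (d ∈ jumps ∨ ∃ e ∈ jumps, d - e ∈ jumps) := by decide
  simp only [SimpleGraph.square, fromRel_adj, circulant_adj_iff, common]
  rw [← neg_sub x y, symm, or_self, ne_eq, ne_eq, sub_eq_zero]

/-- Multiplication by `7` carries the nonzero elements of `J ∪ (J + J)` onto the nonzero
elements outside `J`. -/
theorem seven_mul_notMem_jumps_iff : ∀ d : ZMod 41, (7 * d ≠ 0 ∧ 7 * d ∉ jumps) ↔
    (d ≠ 0 ∧ (d ∈ jumps ∨ ∃ e ∈ jumps, d - e ∈ jumps)) := by decide

/-- Multiplication by `7` as a permutation of `ℤ/41ℤ`; its inverse is multiplication by `6`, as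
`7 * 6 = 42`. -/
def mulSeven : ZMod 41 ≃ ZMod 41 where
  toFun x := 7 * x
  invFun x := 6 * x
  left_inv := by unfold Function.LeftInverse; decide
  right_inv := by unfold Function.RightInverse Function.LeftInverse; decide

theorem circulant41_squco_girth_three :
    Nonempty ((circulantGraph ({4, 5, 8, 10} : Set (ZMod 41))).square ≃g
      (circulantGraph ({4, 5, 8, 10} : Set (ZMod 41)))ᶜ) ∧
    (∃ a b c : ZMod 41, (circulantGraph ({4, 5, 8, 10} : Set (ZMod 41))).Adj a b ∧
      (circulantGraph ({4, 5, 8, 10} : Set (ZMod 41))).Adj b c ∧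
      (circulantGraph ({4, 5, 8, 10} : Set (ZMod 41))).Adj c a) ∧
    (circulantGraph ({4, 5, 8, 10} : Set (ZMod 41))).egirth = 3 := by
  have h₁ : (circulantGraph ({4, 5, 8, 10} : Set (ZMod 41))).Adj 0 4 :=
    (circulant_adj_iff _ _).2 (by decide)
  have h₂ : (circulantGraph ({4, 5, 8, 10} : Set (ZMod 41))).Adj 4 8 :=
    (circulant_adj_iff _ _).2 (by decide)
  have h₃ : (circulantGraph ({4, 5, 8, 10} : Set (ZMod 41))).Adj 8 0 :=
    (circulant_adj_iff _ _).2 (by decide)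
  refine ⟨⟨⟨mulSeven, ?_⟩⟩, ⟨0, 4, 8, h₁, h₂, h₃⟩, le_antisymm ?_ three_le_egirth⟩
  · intro x y
    change (circulantGraph _)ᶜ.Adj (7 * x) (7 * y) ↔ _
    rw [circulant_square_adj_iff, ← seven_mul_notMem_jumps_iff, compl_adj, circulant_adj_iff,
      mul_sub, ne_eq, ne_eq, sub_eq_zero]
  · have hc : (Walk.cons h₁ (Walk.cons h₂ (Walk.cons h₃ Walk.nil))).IsCycle := by
      rw [Walk.cons_isCycle_iff]
      constructor
      · simp [Walk.cons_isPath_iff]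
        decide
      · simp
        decide
    exact egirth_le_length hc
end

section
/- The girth of every nontrivial square-complementary graph belongs to {3, 4, 5, 7}: if G is a square-complementary graph with more than one vertex, then the girth of G equals 3, 4, 5, or 7. -/
/-!
The argument runs through the graph of far pairs: write `x` far from `y` when their
distance is at least three, that is, when they are adjacent in the complement of the square. A
square-complementary graph `G` is isomorphic to its graph of far pairs, by a permutation `φ` of
the vertices, so `deg (φ v)` counts the vertices far from `v`.

Suppose the girth is none of `3, 4, 5`, so that `G` has no cycle of length at most five. Let `n`
and `m` be the numbers of vertices and edges, `d v = deg v`, `e v = deg (φ v)`, `A = ∑ d²` and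
`B = ∑ d e`. Since `φ` is a permutation, `B ≤ A`.

* Without triangles and `4`-cycles, `e v + ∑ u ∈ N(v), d u = n - 1` (`degree_far`). Summing,
  `A + 2m = n(n - 1)` (`sum_sq`).
* No vertex is at distance two from both ends of an edge `ab`, for lack of a `5`-cycle, hence
  `d a + e a + d b + e b ≥ n` (`edge_bound`). Summing over the edges, `A + B ≥ mn`.
* There are no isolated vertices (`degree_pos`), and no leaves (`not_leaf`): a leaf determines the
  graph up to one parameter `k`, and the identity `A + 2m = n(n - 1)` becomes `k(3 - k) = 1`.
* Hence `(d a - 2)(d b - 2) ≥ 0` on every edge `ab`; summing, `4A + B ≤ 2m(n + 3)`.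

The resulting inequalities `m(n + 4) ≤ 2n(n - 1)` and `3n(n - 1) ≤ m(n + 12)` force `n ≤ 12`, and
`∑ (d - 2)² ≥ 0` together with `m ≥ n` leaves only `n = m = 7` with all degrees two (`seven`).
Then `G` is the `7`-cycle, of girth `7` (`egirth_seven`).
-/

open SimpleGraph

namespace SqucoGirth

variable {V : Type*} {G : SimpleGraph V}

lemma no_triangle (h : 6 ≤ G.egirth) {a b c : V} (hab : G.Adj a b) (hbc : G.Adj b c)
    (hca : G.Adj c a) : False := by
  let w : G.Walk a a := .cons hab (.cons hbc (.cons hca .nil))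
  have hw : w.IsCycle := by
    have := hab.ne; have := hbc.ne; have := hca.ne
    simp [w, Walk.isCycle_def, Walk.isTrail_def]
    grind
  have := le_egirth.mp h a w hw
  simp [w] at this
  norm_cast at this

lemma common_unique (h : 6 ≤ G.egirth) {a b x y : V} (hab : a ≠ b) (hax : G.Adj a x)
    (hxb : G.Adj x b) (hay : G.Adj a y) (hyb : G.Adj y b) : x = y := by
  by_contra hxy
  let w : G.Walk a a := .cons hax (.cons hxb (.cons hyb.symm (.cons hay.symm .nil)))
  have hw : w.IsCycle := by
    have := hax.ne; have := hxb.ne; have := hay.ne; have := hyb.ne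
    simp [w, Walk.isCycle_def, Walk.isTrail_def]
    grind
  have := le_egirth.mp h a w hw
  simp [w] at this
  norm_cast at this

lemma no_pentagon (h : 6 ≤ G.egirth) {a b c d e : V} (hab : G.Adj a b) (hbc : G.Adj b c)
    (hcd : G.Adj c d) (hde : G.Adj d e) (hea : G.Adj e a) : False := by
  have hac : a ≠ c := by rintro rfl; exact no_triangle h hcd hde hea
  have hbd : b ≠ d := by rintro rfl; exact no_triangle h hab hde hea
  have hce : c ≠ e := by rintro rfl; exact no_triangle h hab hbc hea
  have hda : d ≠ a := by rintro rfl; exact no_triangle h hab hbc hcd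
  have heb : e ≠ b := by rintro rfl; exact no_triangle h hbc hcd hde
  let w : G.Walk a a := .cons hab (.cons hbc (.cons hcd (.cons hde (.cons hea .nil))))
  have hw : w.IsCycle := by
    have := hab.ne; have := hbc.ne; have := hcd.ne; have := hde.ne; have := hea.ne
    simp [w, Walk.isCycle_def, Walk.isTrail_def]
    grind
  have := le_egirth.mp h a w hw
  simp [w] at this
  norm_cast at this

/-- Two vertices are far apart when they are at distance at least three; equivalently they are
adjacent in the complement of the square. -/
def Far (G : SimpleGraph V) (x y : V) : Prop :=
  x ≠ y ∧ ¬ G.Adj x y ∧ ∀ z, G.Adj x z → ¬ G.Adj z y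

lemma Far.symm {x y : V} (h : Far G x y) : Far G y x :=
  ⟨h.1.symm, fun h' => h.2.1 h'.symm, fun z h1 h2 => h.2.2 z h2.symm h1.symm⟩

/-- A square-complementary graph is isomorphic to its own graph of far pairs. -/
lemma exists_equiv (hsq : Nonempty (G.square ≃g Gᶜ)) :
    ∃ φ : V ≃ V, ∀ x y, G.Adj (φ x) (φ y) ↔ Far G x y := by
  obtain ⟨φ⟩ := hsq
  refine ⟨φ.toEquiv, fun x y => ?_⟩
  have h : Gᶜ.Adj (φ.toEquiv x) (φ.toEquiv y) ↔ G.square.Adj x y := φ.map_rel_iff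
  have hs : G.square.Adj x y ↔ x ≠ y ∧ ¬ Far G x y := by
    simp only [SimpleGraph.square, fromRel_adj, Far]
    grind [G.adj_comm]
  have hne : φ.toEquiv x ≠ φ.toEquiv y ↔ x ≠ y := φ.toEquiv.injective.ne_iff
  have hadj : G.Adj (φ.toEquiv x) (φ.toEquiv y) → φ.toEquiv x ≠ φ.toEquiv y := fun h => h.ne
  have hfar : Far G x y → x ≠ y := fun h => h.1
  rw [hs, compl_adj, hne] at h
  rw [hne] at hadj
  tauto

section Counting

variable [Fintype V] [DecidableRel G.Adj] {φ : V ≃ V}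

open Classical in
lemma card_far (hφ : ∀ x y, G.Adj (φ x) (φ y) ↔ Far G x y) (v : V) :
    G.degree (φ v) = (Finset.univ.filter (fun y => Far G v y)).card := by
  rw [← card_neighborFinset_eq_degree]
  symm
  refine Finset.card_bij (fun y _ => φ y) ?_ ?_ ?_
  · intro y hy; simpa [hφ] using hy
  · intro a _ b _ hab; exact φ.injective hab
  · intro b hb
    refine ⟨φ.symm b, ?_, by simp⟩
    simp only [Finset.mem_filter, Finset.mem_univ, true_and, ← hφ]
    simpa using hb

lemma sum_degree_neighbors (F : V → ℤ) :
    ∑ a, ∑ b ∈ G.neighborFinset a, F b = ∑ b, (G.degree b : ℤ) * F b := by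
  rw [Finset.sum_comm' (t' := Finset.univ) (s' := fun b => G.neighborFinset b)]
  · simp
  · simp [G.adj_comm]

/-- The ball of radius two around `v` has `1 + ∑ u ∈ N(v), deg u` vertices when there are no
triangles and no `4`-cycles; the vertices outside it are counted by `deg (φ v)`. -/
lemma degree_far (h6 : 6 ≤ G.egirth) (hφ : ∀ x y, G.Adj (φ x) (φ y) ↔ Far G x y) (v : V) :
    (G.degree (φ v) : ℤ) + ∑ u ∈ G.neighborFinset v, (G.degree u : ℤ) + 1 = Fintype.card V := by
  classical
  rw [card_far hφ v, Finset.card_filter]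
  have hS : ∑ u ∈ G.neighborFinset v, (G.degree u : ℤ)
      = ∑ y, ∑ u ∈ G.neighborFinset v, if G.Adj u y then (1 : ℤ) else 0 := by
    rw [Finset.sum_comm]
    refine Finset.sum_congr rfl fun u _ => ?_
    rw [← card_neighborFinset_eq_degree, neighborFinset_eq_filter, Finset.card_filter]
    push_cast; rfl
  have hd : (G.degree v : ℤ) = ∑ y, if G.Adj v y then (1 : ℤ) else 0 := by
    rw [← card_neighborFinset_eq_degree, neighborFinset_eq_filter, Finset.card_filter]
    push_cast; rfl
  have key : ∀ y, (if Far G v y then (1 : ℤ) else 0)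
      + (∑ u ∈ G.neighborFinset v, if G.Adj u y then (1 : ℤ) else 0)
      + (if G.Adj v y then (1 : ℤ) else 0)
      = 1 + (if v = y then (G.degree v : ℤ) - 1 else 0) := by
    intro y
    by_cases hvy : v = y
    · subst hvy
      have : ∑ u ∈ G.neighborFinset v, (if G.Adj u v then (1 : ℤ) else 0) = G.degree v := by
        rw [Finset.sum_congr rfl (g := fun _ => (1 : ℤ))]
        · simp
        · intro u hu
          rw [if_pos ((G.mem_neighborFinset v u).mp hu).symm]
      rw [this]; simp [Far]
    · by_cases hadj : G.Adj v y
      · have : ∑ u ∈ G.neighborFinset v, (if G.Adj u y then (1 : ℤ) else 0) = 0 :=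
          Finset.sum_eq_zero fun u hu => if_neg fun hu' =>
            no_triangle h6 ((G.mem_neighborFinset v u).mp hu) hu' hadj.symm
        rw [this]; simp [Far, hadj, hvy]
      · by_cases hz : ∃ z, G.Adj v z ∧ G.Adj z y
        · obtain ⟨z, h1, h2⟩ := hz
          have : ∑ u ∈ G.neighborFinset v, (if G.Adj u y then (1 : ℤ) else 0) = 1 := by
            rw [Finset.sum_eq_single z]
            · simp [h2]
            · intro u hu huz
              exact if_neg fun hu' =>
                huz (common_unique h6 hvy ((G.mem_neighborFinset v u).mp hu) hu' h1 h2)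
            · intro hz; simp [h1] at hz
          have hf : ¬ Far G v y := fun hf => hf.2.2 z h1 h2
          rw [this]; simp [hf, hadj, hvy]
        · have hf : Far G v y := ⟨hvy, hadj, fun z h1 h2 => hz ⟨z, h1, h2⟩⟩
          have : ∑ u ∈ G.neighborFinset v, (if G.Adj u y then (1 : ℤ) else 0) = 0 :=
            Finset.sum_eq_zero fun u hu => if_neg fun hu' =>
              hz ⟨u, (G.mem_neighborFinset v u).mp hu, hu'⟩
          rw [this]; simp [hf, hadj, hvy]
  have hsum := Finset.sum_congr (s₁ := Finset.univ) rfl fun y _ => key y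
  simp only [Finset.sum_add_distrib, Finset.sum_ite_eq, Finset.mem_univ, if_true, ← hS,
    ← hd] at hsum
  simp at hsum
  push_cast
  simp
  linarith

/-- For an edge `ab` every vertex is adjacent to or far from `a` or `b`, since a vertex at
distance two from both closes a `5`-cycle or a triangle. -/
lemma edge_bound (h6 : 6 ≤ G.egirth) (hφ : ∀ x y, G.Adj (φ x) (φ y) ↔ Far G x y) {a b : V}
    (hab : G.Adj a b) :
    (Fintype.card V : ℤ) ≤ (G.degree a + G.degree (φ a)) + (G.degree b + G.degree (φ b)) := by
  classical
  have hcov : (Finset.univ : Finset V) ⊆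
      (G.neighborFinset a ∪ Finset.univ.filter (fun y => Far G a y)) ∪
      (G.neighborFinset b ∪ Finset.univ.filter (fun y => Far G b y)) := by
    intro y _
    by_contra hy
    simp only [Finset.mem_union, mem_neighborFinset, Finset.mem_filter, Finset.mem_univ, true_and,
      not_or] at hy
    obtain ⟨⟨h1, h2⟩, h3, h4⟩ := hy
    have hya : a ≠ y := by rintro rfl; exact h3 hab.symm
    have hyb : b ≠ y := by rintro rfl; exact h1 hab
    unfold Far at h2 h4
    push Not at h2 h4
    obtain ⟨z, hz1, hz2⟩ := h2 hya h1
    obtain ⟨t, ht1, ht2⟩ := h4 hyb h3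
    exact no_pentagon h6 hz1 hz2 ht2.symm ht1.symm hab.symm
  have := (Finset.card_le_card hcov).trans (Finset.card_union_le _ _)
  have h1 := Finset.card_union_le (G.neighborFinset a) (Finset.univ.filter (fun y => Far G a y))
  have h2 := Finset.card_union_le (G.neighborFinset b) (Finset.univ.filter (fun y => Far G b y))
  rw [← card_far hφ, card_neighborFinset_eq_degree] at h1 h2
  rw [Finset.card_univ] at this
  exact_mod_cast (by omega : Fintype.card V ≤ _)

lemma degree_pos [Nontrivial V] (hφ : ∀ x y, G.Adj (φ x) (φ y) ↔ Far G x y) (v : V) :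
    0 < G.degree v := by
  classical
  rw [Nat.pos_iff_ne_zero]
  intro h0
  have hno : ∀ y, ¬ G.Adj v y := by
    intro y hy
    have := (G.degree_pos_iff_exists_adj v).mpr ⟨y, hy⟩
    omega
  -- an isolated vertex is far from all others, so its image is adjacent to all others
  have huniv : ∀ y, y ≠ v → G.Adj (φ v) (φ y) := fun y hy =>
    (hφ v y).mpr ⟨hy.symm, hno y, fun z hz => absurd hz (hno z)⟩
  obtain ⟨w, hw⟩ := exists_ne v
  by_cases hvv : φ v = v
  · exact hno (φ w) (by simpa [hvv] using huniv w hw)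
  · have := huniv (φ.symm v) (fun h => hvv ((φ.symm_apply_eq.mp h).symm))
    simp at this
    exact hno _ this.symm

lemma sum_sq (h6 : 6 ≤ G.egirth) (hφ : ∀ x y, G.Adj (φ x) (φ y) ↔ Far G x y) :
    ∑ v, (G.degree v : ℤ) + ∑ v, (G.degree v : ℤ) * G.degree v + Fintype.card V
      = Fintype.card V * Fintype.card V := by
  have h := Finset.sum_congr (s₁ := Finset.univ) rfl fun v _ => degree_far h6 hφ v
  simp only [Finset.sum_add_distrib, sum_degree_neighbors] at h
  rw [Equiv.sum_comp φ (fun v => (G.degree v : ℤ))] at h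
  simpa using h

/-- With a leaf `v` at `u`, exactly one vertex `t` is far from `u`, the neighbours of `t` are the
vertices at distance two from `u`, `v` is the only leaf at `u`, and all vertices other than
`u`, `v`, `t` have degree two. Such degrees violate `sum_sq`. -/
lemma not_leaf [Nontrivial V] (h6 : 6 ≤ G.egirth)
    (hφ : ∀ x y, G.Adj (φ x) (φ y) ↔ Far G x y) (v : V) : G.degree v ≠ 1 := by
  classical
  intro h1
  obtain ⟨u, huv, huniq⟩ := degree_eq_one_iff_existsUnique_adj.mp h1
  -- no `4`-cycle in the graph of far pairs
  have hC4 : ∀ {a b x y : V}, a ≠ b → Far G a x → Far G b x → Far G a y → Far G b y → x = y := by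
    intro a b x y hab h1 h2 h3 h4
    exact φ.injective (common_unique h6 (φ.injective.ne hab) ((hφ _ _).mpr h1)
      ((hφ _ _).mpr h2.symm) ((hφ _ _).mpr h3) ((hφ _ _).mpr h4.symm))
  -- a leaf at `u` is far from everything outside the closed neighbourhood of `u`
  have hleaf : ∀ l, (∀ y, G.Adj l y → y = u) → ∀ y, y ≠ l → y ≠ u → ¬ G.Adj u y → Far G l y := by
    intro l hl y hyl hyu huy
    refine ⟨hyl.symm, fun h => hyu (hl y h), fun z hz hzy => huy ?_⟩
    rwa [← hl z hz]
  obtain ⟨t, ht⟩ : ∃ t, Far G u t := by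
    obtain ⟨y, hy⟩ := (G.degree_pos_iff_exists_adj (φ u)).mp (degree_pos hφ (φ u))
    exact ⟨φ.symm y, by rw [← hφ]; simpa using hy⟩
  have htv : t ≠ v := by rintro rfl; exact ht.2.1 huv.symm
  have hvt : Far G v t := hleaf v huniq t htv ht.1.symm ht.2.1
  have htuniq : ∀ y, Far G u y → y = t := fun y hy =>
    hC4 huv.ne (hleaf v huniq y (by rintro rfl; exact hy.2.1 huv.symm) hy.1.symm hy.2.1) hy hvt ht
  -- vertices at distance two from `u`
  have hL2 : ∀ y, y ≠ u → ¬ G.Adj u y → y ≠ t → ∃ p, G.Adj u p ∧ G.Adj p y := by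
    intro y hy1 hy2 hy3
    by_contra hno
    push Not at hno
    exact hy3 (htuniq y ⟨hy1.symm, hy2, hno⟩)
  have hNt : ∀ y, G.Adj t y ↔ (y ≠ u ∧ ¬ G.Adj u y ∧ y ≠ t) := by
    intro y
    constructor
    · intro h
      refine ⟨?_, fun h' => ht.2.2 y h' h.symm, h.ne'⟩
      rintro rfl
      exact ht.2.1 h.symm
    · rintro ⟨hy1, hy2, hy3⟩
      by_contra hty
      have hyv : y ≠ v := by rintro rfl; exact hy2 huv.symm
      have hvy : Far G v y := hleaf v huniq y hyv hy1 hy2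
      -- `v`, `y`, `t` are not pairwise far, as `G` has no triangle
      have hyt : ¬ Far G y t := fun hyt =>
        no_triangle h6 ((hφ _ _).mpr hvy) ((hφ _ _).mpr hyt) ((hφ _ _).mpr hvt.symm)
      have : ∃ z, G.Adj y z ∧ G.Adj z t := by
        by_contra hno
        push Not at hno
        exact hyt ⟨hy3, fun h => hty h.symm, hno⟩
      obtain ⟨z, hyz, hzt⟩ := this
      obtain ⟨p, hup, hpy⟩ := hL2 y hy1 hy2 hy3
      have hzu : ¬ G.Adj u z := fun h => ht.2.2 z h hzt
      obtain ⟨q, huq, hqz⟩ := hL2 z (by rintro rfl; exact hy2 hyz.symm) hzu hzt.ne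
      exact no_pentagon h6 hup hpy hyz hqz.symm huq.symm
  obtain ⟨s, hs⟩ := (G.degree_pos_iff_exists_adj t).mp (degree_pos hφ t)
  have hs' := (hNt s).mp hs
  -- a second leaf `p` at `u` would have both `s` and `t` as common far vertices with `v`
  have hdegN : ∀ p, G.Adj u p → p ≠ v → G.degree p = 2 := by
    intro p hup hpv
    have hex : ∃ y, G.Adj p y ∧ y ≠ u := by
      by_contra hno
      push Not at hno
      have hpt : t ≠ p := by rintro rfl; exact ht.2.1 hup
      have hps : s ≠ p := by rintro rfl; exact hs'.2.1 hup
      have hvs : s ≠ v := by rintro rfl; exact hs'.2.1 huv.symm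
      exact hs'.2.2 (hC4 hpv (hleaf p hno s hps hs'.1 hs'.2.1) (hleaf v huniq s hvs hs'.1 hs'.2.1)
        (hleaf p hno t hpt ht.1.symm ht.2.1) hvt)
    obtain ⟨y, hpy, hyu⟩ := hex
    have hchild : ∀ x, G.Adj p x → x ≠ u → G.Adj t x := by
      intro x hpx hxu
      refine (hNt x).mpr ⟨hxu, fun h => no_triangle h6 hup hpx h.symm, ?_⟩
      rintro rfl
      exact ht.2.2 p hup hpx
    have htp : t ≠ p := by rintro rfl; exact ht.2.1 hup
    have : G.neighborFinset p = {u, y} := by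
      ext x
      simp only [mem_neighborFinset, Finset.mem_insert, Finset.mem_singleton]
      constructor
      · intro hpx
        by_cases hxu : x = u
        · exact Or.inl hxu
        · exact Or.inr (common_unique h6 htp (hchild x hpx hxu) hpx.symm (hchild y hpy hyu)
            hpy.symm)
      · rintro (rfl | rfl)
        · exact hup.symm
        · exact hpy
    rw [← card_neighborFinset_eq_degree, this, Finset.card_pair hyu.symm]
  have hdegT : ∀ x, G.Adj t x → G.degree x = 2 := by
    intro x hx
    obtain ⟨hx1, hx2, hx3⟩ := (hNt x).mp hx
    obtain ⟨p, hup, hpx⟩ := hL2 x hx1 hx2 hx3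
    have htp : t ≠ p := by rintro rfl; exact ht.2.1 hup
    have : G.neighborFinset x = {t, p} := by
      ext y
      simp only [mem_neighborFinset, Finset.mem_insert, Finset.mem_singleton]
      constructor
      · intro hxy
        by_cases hyt : y = t
        · exact Or.inl hyt
        right
        by_cases huy : G.Adj u y
        · exact common_unique h6 hx1.symm huy hxy.symm hup hpx
        · have hyu : y ≠ u := by rintro rfl; exact hx2 hxy.symm
          exact (no_triangle h6 hx hxy ((hNt y).mpr ⟨hyu, huy, hyt⟩).symm).elim
      · rintro (rfl | rfl)
        · exact hx.symm
        · exact hpx.symm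
    rw [← card_neighborFinset_eq_degree, this, Finset.card_pair htp]
  have hsplit : ∀ F : V → ℤ, ∑ x, F x =
      F u + F t + ∑ x ∈ G.neighborFinset u, F x + ∑ x ∈ G.neighborFinset t, F x := by
    intro F
    have huniv : (Finset.univ : Finset V) =
        insert u (insert t (G.neighborFinset u ∪ G.neighborFinset t)) := by
      ext x
      simp only [Finset.mem_univ, Finset.mem_insert, Finset.mem_union, mem_neighborFinset, hNt,
        true_iff]
      tauto
    rw [huniv, Finset.sum_insert, Finset.sum_insert, Finset.sum_union]
    · ring
    · rw [Finset.disjoint_left]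
      intro x hx hx'
      simp only [mem_neighborFinset, hNt] at hx hx'
      exact hx'.2.1 hx
    · simp [ht.2.1]
    · simp only [Finset.mem_insert, Finset.mem_union, mem_neighborFinset, not_or]
      exact ⟨ht.1, G.irrefl, fun h => ht.2.1 h.symm⟩
  have hsum : ∀ F : ℕ → ℤ, ∑ x, F (G.degree x) = F (G.degree u) + F (G.degree t)
      + (F 1 + (G.degree u - 1) * F 2) + G.degree t * F 2 := by
    intro F
    rw [hsplit]
    have e1 : ∑ x ∈ G.neighborFinset t, F (G.degree x) = G.degree t * F 2 := by
      rw [Finset.sum_congr rfl (g := fun _ => F 2)]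
      · simp
      · intro x hx
        rw [hdegT x (by simpa using hx)]
    have e2 : ∑ x ∈ G.neighborFinset u, F (G.degree x) = F 1 + (G.degree u - 1) * F 2 := by
      have hv : v ∈ G.neighborFinset u := by simpa using huv.symm
      rw [← Finset.add_sum_erase _ _ hv, h1, Finset.sum_congr rfl (g := fun _ => F 2)]
      · rw [Finset.sum_const, Finset.card_erase_of_mem hv, card_neighborFinset_eq_degree,
          nsmul_eq_mul, Nat.cast_sub (degree_pos hφ u)]
        simp
      · intro x hx
        simp only [Finset.mem_erase, mem_neighborFinset] at hx
        rw [hdegN x hx.2 hx.1]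
    rw [e1, e2]
  have hn := hsum (fun _ => 1)
  have hd := hsum (fun k => k)
  have hdd := hsum (fun k => (k : ℤ) * k)
  have hA := sum_sq h6 hφ
  have hu := degree_far h6 hφ u
  have hfu : G.degree (φ u) = 1 := by
    rw [card_far hφ, Finset.card_eq_one]
    refine ⟨t, ?_⟩
    ext y
    simp only [Finset.mem_filter, Finset.mem_univ, true_and, Finset.mem_singleton]
    exact ⟨htuniq y, by rintro rfl; exact ht⟩
  have hSu : ∑ x ∈ G.neighborFinset u, (G.degree x : ℤ) = 1 + (G.degree u - 1) * 2 := by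
    have := hsplit (fun x => (G.degree x : ℤ))
    have e1 : ∑ x ∈ G.neighborFinset t, (G.degree x : ℤ) = G.degree t * 2 := by
      rw [Finset.sum_congr rfl (g := fun _ => (2 : ℤ))]
      · simp
      · intro x hx
        rw [hdegT x (by simpa using hx)]; rfl
    push_cast at hd
    linarith
  rw [hfu, hSu] at hu
  simp only [Finset.sum_const, Finset.card_univ, nsmul_eq_mul, mul_one] at hn
  rw [hd, hdd] at hA
  push_cast at hA hu hn
  generalize (G.degree t : ℤ) = k at *
  generalize (G.degree u : ℤ) = r at *
  generalize (Fintype.card V : ℤ) = n at *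
  have hr : r = k + 1 := by linarith
  have hn' : n = 2 * k + 3 := by linarith
  subst hr hn'
  have hk : k * (3 - k) = 1 := by linarith
  rcases Int.eq_one_or_neg_one_of_mul_eq_one hk with rfl | rfl <;> omega

/-- If all degrees are at least two, the double counts leave only seven vertices, all of degree
two. -/
lemma seven (h6 : 6 ≤ G.egirth) (hφ : ∀ x y, G.Adj (φ x) (φ y) ↔ Far G x y) [Nontrivial V]
    (h2 : ∀ v, 2 ≤ G.degree v) : Fintype.card V = 7 ∧ ∀ v, G.degree v = 2 := by
  have hA := sum_sq h6 hφ
  have hM : ∑ v, (G.degree v : ℤ) = 2 * (G.edgeFinset.card : ℤ) := by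
    exact_mod_cast G.sum_degrees_eq_twice_card_edges
  set m : ℤ := (G.edgeFinset.card : ℤ)
  set A : ℤ := ∑ v, (G.degree v : ℤ) * G.degree v with hAdef
  set B : ℤ := ∑ v, (G.degree v : ℤ) * G.degree (φ v) with hBdef
  have hphi : ∑ v, (G.degree (φ v) : ℤ) * G.degree (φ v) = A :=
    Equiv.sum_comp φ (fun v => (G.degree v : ℤ) * G.degree v)
  have hBA : B ≤ A := by
    have : 0 ≤ ∑ v, ((G.degree v : ℤ) - G.degree (φ v)) ^ 2 :=
      Finset.sum_nonneg fun _ _ => sq_nonneg _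
    have e : ∑ v, ((G.degree v : ℤ) - G.degree (φ v)) ^ 2 = A - 2 * B + A := by
      have hs : ∀ v, ((G.degree v : ℤ) - G.degree (φ v)) ^ 2 = (G.degree v : ℤ) * G.degree v
          - 2 * ((G.degree v : ℤ) * G.degree (φ v))
          + (G.degree (φ v) : ℤ) * G.degree (φ v) := fun v => by ring
      simp only [hs, Finset.sum_add_distrib, Finset.sum_sub_distrib, ← Finset.mul_sum, hphi]
      rfl
    linarith
  -- summing `edge_bound` over all ordered edges
  have hAB : m * Fintype.card V ≤ A + B := by
    have h : ∑ a, ∑ b ∈ G.neighborFinset a, (Fintype.card V : ℤ) ≤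
        ∑ a, ∑ b ∈ G.neighborFinset a,
          (((G.degree a : ℤ) + G.degree (φ a)) + (G.degree b + G.degree (φ b))) :=
      Finset.sum_le_sum fun a _ => Finset.sum_le_sum fun b hb =>
        edge_bound h6 hφ ((G.mem_neighborFinset a b).mp hb)
    simp only [Finset.sum_add_distrib, sum_degree_neighbors, Finset.sum_const,
      card_neighborFinset_eq_degree, nsmul_eq_mul, ← Finset.sum_mul, hM] at h
    linarith
  -- summing `(deg a - 2) * (deg b - 2) ≥ 0` over all ordered edges
  have hprod : 4 * A + B ≤ 2 * m * (Fintype.card V + 3) := by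
    have h : 0 ≤ ∑ a, ∑ b ∈ G.neighborFinset a,
        ((G.degree a : ℤ) * G.degree b - 2 * G.degree a - 2 * G.degree b + 4) := by
      refine Finset.sum_nonneg fun a _ => Finset.sum_nonneg fun b _ => ?_
      have ha : (2 : ℤ) ≤ G.degree a := by exact_mod_cast h2 a
      have hb : (2 : ℤ) ≤ G.degree b := by exact_mod_cast h2 b
      nlinarith [mul_nonneg (sub_nonneg.mpr ha) (sub_nonneg.mpr hb)]
    have hS : ∀ a, ∑ b ∈ G.neighborFinset a, (G.degree b : ℤ)
        = Fintype.card V - 1 - G.degree (φ a) := fun a => by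
      linarith [degree_far h6 hφ a]
    have e : ∑ a, ∑ b ∈ G.neighborFinset a,
        ((G.degree a : ℤ) * G.degree b - 2 * G.degree a - 2 * G.degree b + 4)
        = ∑ a, (((Fintype.card V : ℤ) + 3) * G.degree a - G.degree a * G.degree (φ a)
          - 2 * (G.degree a * G.degree a)) - 2 * A := by
      have e2 : ∑ a, ∑ b ∈ G.neighborFinset a, (2 * (G.degree b : ℤ)) = 2 * A := by
        rw [sum_degree_neighbors, hAdef, Finset.mul_sum]
        exact Finset.sum_congr rfl fun _ _ => by ring
      rw [← e2, ← Finset.sum_sub_distrib]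
      refine Finset.sum_congr rfl fun a _ => ?_
      simp only [Finset.sum_add_distrib, Finset.sum_sub_distrib, ← Finset.mul_sum, hS,
        Finset.sum_const, card_neighborFinset_eq_degree, nsmul_eq_mul]
      ring
    rw [e] at h
    simp only [Finset.sum_sub_distrib, ← Finset.mul_sum, hM] at h
    linarith
  have hsq : ∑ v, ((G.degree v : ℤ) - 2) ^ 2 = A - 8 * m + 4 * Fintype.card V := by
    have : ∀ v, ((G.degree v : ℤ) - 2) ^ 2
        = (G.degree v : ℤ) * G.degree v - 4 * G.degree v + 4 := fun v => by ring
    simp only [this, Finset.sum_add_distrib, Finset.sum_sub_distrib, ← Finset.mul_sum, hM]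
    simp
    ring
  have hsq0 : 0 ≤ ∑ v, ((G.degree v : ℤ) - 2) ^ 2 := Finset.sum_nonneg fun _ _ => sq_nonneg _
  have hmn : (Fintype.card V : ℤ) ≤ m := by
    have : ∑ v : V, (2 : ℤ) ≤ ∑ v, (G.degree v : ℤ) :=
      Finset.sum_le_sum fun v _ => by exact_mod_cast h2 v
    simp [hM] at this
    linarith
  have hcard : 1 < Fintype.card V := Fintype.one_lt_card
  rw [hM] at hA
  have hfin : Fintype.card V = 7 ∧ ∑ v, ((G.degree v : ℤ) - 2) ^ 2 = 0 := by
    rw [hsq] at hsq0 ⊢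
    generalize Fintype.card V = n at *
    have hA' : A = n * n - n - 2 * m := by linarith
    have hn12 : n ≤ 12 := by
      have hn : (1 : ℤ) < n := by exact_mod_cast hcard
      have i1 : m * (n + 4) ≤ 2 * (n * (n - 1)) := by nlinarith
      have i2 : 3 * (n * (n - 1)) ≤ m * (n + 12) := by nlinarith
      have i3 : 3 * (n * (n - 1)) * (n + 4) ≤ 2 * (n * (n - 1)) * ((n : ℤ) + 12) := by
        have j1 := mul_le_mul_of_nonneg_right i2 (by linarith : (0 : ℤ) ≤ (n : ℤ) + 4)
        have j2 := mul_le_mul_of_nonneg_right i1 (by linarith : (0 : ℤ) ≤ (n : ℤ) + 12)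
        linarith
      have i4 : (0 : ℤ) < n * (n - 1) := mul_pos (by linarith) (by linarith)
      have i5 : (n : ℤ) * (n - 1) * n ≤ (n * (n - 1)) * 12 := by linarith
      exact_mod_cast le_of_mul_le_mul_left i5 i4
    clear_value m A B
    interval_cases n <;> push_cast at * <;> first | omega | (refine ⟨trivial, ?_⟩; omega)
  refine ⟨hfin.1, fun v => ?_⟩
  have := (Finset.sum_eq_zero_iff_of_nonneg fun _ _ => sq_nonneg _).mp hfin.2 v (Finset.mem_univ v)
  have : (G.degree v : ℤ) = 2 := by
    have := pow_eq_zero_iff (two_ne_zero) |>.mp this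
    linarith
  exact_mod_cast this

/-- A `2`-regular graph on seven vertices without cycles shorter than six is the `7`-cycle: a
`6`-cycle would leave the seventh vertex without neighbours. -/
lemma egirth_seven (h6 : 6 ≤ G.egirth) (hcard : Fintype.card V = 7)
    (h2 : ∀ v, G.degree v = 2) : G.egirth = 7 := by
  classical
  have hnc : ∀ v, (G.neighborSet v).ncard = 2 := fun v => by
    rw [Set.ncard_eq_toFinset_card', Set.toFinset_card, card_neighborSet_eq_degree, h2]
  have hcyc : ¬ G.IsAcyclic := by
    intro hac
    obtain ⟨v⟩ : Nonempty V := Fintype.card_pos_iff.mp (by omega)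
    have hC : G.IsCycles := fun w _ => hnc w
    have hne : (G.neighborSet v).Nonempty := Set.nonempty_of_ncard_ne_zero (by rw [hnc]; simp)
    obtain ⟨p, hp, _⟩ := hC.exists_cycle_toSubgraph_verts_eq_connectedComponentSupp
      (c := G.connectedComponentMk v) (v := v) rfl hne
    exact hac p hp
  obtain ⟨a, w, hw, hlen⟩ := exists_egirth_eq_length.mpr hcyc
  have hge : 6 ≤ w.length := by
    rw [hlen] at h6; exact_mod_cast h6
  have htail : w.support.tail.length = w.length := by simp
  have hle : w.length ≤ 7 := by
    rw [← htail, ← hcard]; exact hw.support_nodup.length_le_card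
  have hne : w.length ≠ 6 := by
    intro h
    obtain ⟨z, hz⟩ : ∃ z, z ∉ w.support := by
      by_contra! hall
      have : (Finset.univ : Finset V) ⊆ w.support.tail.toFinset := by
        intro x _
        have := hall x
        rw [List.mem_toFinset]
        by_cases hxa : x = a
        · subst hxa; exact Walk.end_mem_tail_support hw.not_nil
        · rw [Walk.mem_support_iff] at this
          exact this.resolve_left hxa
      have := (Finset.card_le_card this).trans (List.toFinset_card_le _)
      rw [Finset.card_univ, htail] at this
      omega
    have hzs : ∀ x ≠ z, x ∈ w.support := by
      intro x hxz
      by_contra hx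
      have : (w.support.tail.toFinset) ⊆ (Finset.univ.erase x).erase z := by
        intro y hy
        have hy : y ∈ w.support := List.mem_of_mem_tail (List.mem_toFinset.mp hy)
        simp only [Finset.mem_erase, Finset.mem_univ, and_true]
        exact ⟨by rintro rfl; exact hz hy, by rintro rfl; exact hx hy⟩
      have := Finset.card_le_card this
      rw [List.toFinset_card_of_nodup hw.support_nodup, htail, Finset.card_erase_of_mem,
        Finset.card_erase_of_mem, Finset.card_univ] at this
      · omega
      · simp
      · simp [hxz.symm]
    obtain ⟨x, hx⟩ := (G.degree_pos_iff_exists_adj z).mp (by rw [h2]; norm_num)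
    have hxw := hzs x hx.ne'
    have heq : w.toSubgraph.neighborSet x = G.neighborSet x :=
      Set.eq_of_subset_of_ncard_le (w.toSubgraph.neighborSet_subset x)
        (by rw [hnc, hw.ncard_neighborSet_toSubgraph_eq_two hxw]) (Set.toFinite _)
    have hzx : z ∈ w.toSubgraph.neighborSet x := by rw [heq]; exact hx.symm
    exact hz (w.mem_verts_toSubgraph.mp (w.toSubgraph.edge_vert hzx.symm))
  rw [hlen, show w.length = 7 by omega]
  rfl

end Counting

end SqucoGirth

theorem squco_girth_mem {V : Type*} [Fintype V] [Nontrivial V] (G : SimpleGraph V)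
    (hsq : Nonempty (G.square ≃g Gᶜ)) :
    G.egirth = 3 ∨ G.egirth = 4 ∨ G.egirth = 5 ∨ G.egirth = 7 := by
  classical
  by_contra! hcon
  obtain ⟨n3, n4, n5, n7⟩ := hcon
  have h6 : 6 ≤ G.egirth := by
    have h3 : 3 ≤ G.egirth := three_le_egirth
    generalize G.egirth = g at *
    induction g using ENat.recTopCoe with
    | top => simp
    | coe k =>
      norm_cast at *
      omega
  obtain ⟨φ, hφ⟩ := SqucoGirth.exists_equiv hsq
  have h2 : ∀ v, 2 ≤ G.degree v := fun v => by
    have := SqucoGirth.degree_pos hφ v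
    have := SqucoGirth.not_leaf h6 hφ v
    omega
  obtain ⟨hc, hd⟩ := SqucoGirth.seven h6 hφ h2
  exact n7 (SqucoGirth.egirth_seven h6 hc hd)
end

section
/- There is no square-complementary graph of girth 6 with at most 11 vertices: if G is a finite simple graph on at most 11 vertices whose girth equals 6, then the square of G is not isomorphic to the complement of G. -/
/-!
Let `F` be the far graph of `G`, joining vertices at distance at least 3; it is the complement of
`G²`. If `G² ≃ Gᶜ` then `F ≃ G`, so neither `G` nor `F` has a cycle of length 3, 4 or 5.

Fix a 6-cycle `c 0, …, c 5` of `G`. Antipodal vertices of it are adjacent in `F`. A vertex off the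
hexagon has at most one neighbour on it, and no two vertices have the same neighbour there
(`Att.unique`, a 4-cycle of `F`). As `F` has no triangle:
* vertices attached at consecutive indices force vertices attached at both antipodes
  (`Att.consecutive`);
* vertices attached at indices differing by 2 have a common neighbour not adjacent to the hexagon
  (`Att.exists_remote`);
* such a remote vertex is joined to attached vertices at three alternate indices.

In the last situation (`no_remote`), a further attached vertex antipodal to one of these three would
give attached vertices at all six indices, hence 12 vertices, and otherwise `F` contains a 5-cycle.
So on at most 11 vertices there is no remote vertex, and all vertices off the hexagon are attached
at two antipodal indices at most. In the few graphs left (`terminal`), either `F` has a 4-cycle or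
the numbers of vertices with at most one neighbour in `F` and in `G` disagree.
-/

open SimpleGraph

namespace SqucoGirthSix

variable {V : Type*} {G : SimpleGraph V}

/-- `G` has no cycle of length 3, 4 or 5. A closed walk of length 3 or 5 in such a graph cannot
exist, so only the 4-cycle clause needs distinctness hypotheses. -/
structure NoShort (G : SimpleGraph V) : Prop where
  no3 : ∀ {a b c : V}, G.Adj a b → G.Adj b c → G.Adj c a → False
  no4 : ∀ {a b c d : V}, a ≠ c → b ≠ d →
    G.Adj a b → G.Adj b c → G.Adj c d → G.Adj d a → False
  no5 : ∀ {a b c d e : V},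
    G.Adj a b → G.Adj b c → G.Adj c d → G.Adj d e → G.Adj e a → False

/-- The graph joining two distinct vertices exactly when their distance in `G` is at least 3. -/
def farGraph (G : SimpleGraph V) : SimpleGraph V where
  Adj x y := x ≠ y ∧ ¬ G.Adj x y ∧ ∀ z, G.Adj x z → ¬ G.Adj z y
  symm := ⟨fun _ _ h => ⟨h.1.symm, fun h' => h.2.1 h'.symm,
    fun z h1 h2 => h.2.2 z h2.symm h1.symm⟩⟩
  loopless := ⟨fun _ h => h.1 rfl⟩

lemma exists_common {x y : V} (h : ¬ (farGraph G).Adj x y) (hne : x ≠ y) (hadj : ¬ G.Adj x y) :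
    ∃ z, G.Adj x z ∧ G.Adj z y := by
  by_contra hc
  push Not at hc
  exact h ⟨hne, hadj, hc⟩

lemma noShort_of_egirth (h : G.egirth = 6) : NoShort G := by
  have key : ∀ {a : V} (w : G.Walk a a), w.IsCycle → w.length < 6 → False := by
    intro a w hw hl
    have h1 : G.egirth ≤ w.length := by
      rw [SimpleGraph.egirth]
      exact iInf_le_of_le a (iInf_le_of_le w (iInf_le_of_le hw le_rfl))
    rw [h] at h1
    have h2 : 6 ≤ w.length := by exact_mod_cast h1
    omega
  have no3 : ∀ {a b c : V}, G.Adj a b → G.Adj b c → G.Adj c a → False := by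
    intro a b c hab hbc hca
    refine key (Walk.cons hab (Walk.cons hbc (Walk.cons hca Walk.nil))) ?_ (by simp)
    have := hab.ne; have := hbc.ne; have := hca.ne
    simp only [Walk.cons_isCycle_iff, Walk.cons_isPath_iff, Walk.support_cons, Walk.support_nil,
      Walk.edges_cons, Walk.edges_nil, List.mem_cons, Sym2.eq_iff, Walk.IsPath.nil]
    grind
  refine ⟨no3, ?_, ?_⟩
  · intro a b c d hac hbd hab hbc hcd hda
    refine key (Walk.cons hab (Walk.cons hbc (Walk.cons hcd (Walk.cons hda Walk.nil)))) ?_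
      (by simp)
    have := hab.ne; have := hbc.ne; have := hcd.ne; have := hda.ne
    simp only [Walk.cons_isCycle_iff, Walk.cons_isPath_iff, Walk.support_cons, Walk.support_nil,
      Walk.edges_cons, Walk.edges_nil, List.mem_cons, Sym2.eq_iff, Walk.IsPath.nil]
    grind
  · intro a b c d e hab hbc hcd hde hea
    -- equal vertices at distance 2 along the closed walk would leave a triangle
    have : a ≠ c := by rintro rfl; exact no3 hcd hde hea
    have : b ≠ d := by rintro rfl; exact no3 hde hea hab
    have : c ≠ e := by rintro rfl; exact no3 hea hab hbc
    have : d ≠ a := by rintro rfl; exact no3 hab hbc hcd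
    have : e ≠ b := by rintro rfl; exact no3 hbc hcd hde
    refine key (Walk.cons hab (Walk.cons hbc (Walk.cons hcd (Walk.cons hde
      (Walk.cons hea Walk.nil))))) ?_ (by simp)
    have := hab.ne; have := hbc.ne; have := hcd.ne; have := hde.ne; have := hea.ne
    simp only [Walk.cons_isCycle_iff, Walk.cons_isPath_iff, Walk.support_cons, Walk.support_nil,
      Walk.edges_cons, Walk.edges_nil, List.mem_cons, Sym2.eq_iff, Walk.IsPath.nil]
    grind

lemma NoShort.of_iso {H : SimpleGraph V} (hG : NoShort G) (f : H ≃g G) : NoShort H where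
  no3 h1 h2 h3 := hG.no3 (f.map_adj_iff.2 h1) (f.map_adj_iff.2 h2) (f.map_adj_iff.2 h3)
  no4 n1 n2 h1 h2 h3 h4 := hG.no4 (f.injective.ne n1) (f.injective.ne n2)
    (f.map_adj_iff.2 h1) (f.map_adj_iff.2 h2) (f.map_adj_iff.2 h3) (f.map_adj_iff.2 h4)
  no5 h1 h2 h3 h4 h5 := hG.no5 (f.map_adj_iff.2 h1) (f.map_adj_iff.2 h2) (f.map_adj_iff.2 h3)
    (f.map_adj_iff.2 h4) (f.map_adj_iff.2 h5)

/-- A 6-cycle of `G`, as an injective map from `ℤ/6` sending successive indices to neighbours. -/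
structure Hex (G : SimpleGraph V) (c : ZMod 6 → V) : Prop where
  inj : Function.Injective c
  adj : ∀ i, G.Adj (c i) (c (i + 1))

lemma exists_hex (h : G.egirth = 6) : ∃ c, Hex G c := by
  have hne : ¬ G.IsAcyclic := by
    intro ha
    rw [← SimpleGraph.egirth_eq_top] at ha
    rw [ha] at h
    exact absurd h (by decide)
  obtain ⟨a, w, hw, hl⟩ := SimpleGraph.exists_egirth_eq_length.2 hne
  rw [h] at hl
  have hl : w.length = 6 := by exact_mod_cast hl.symm
  refine ⟨fun i => w.getVert i.val, ?_, ?_⟩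
  · intro i j hij
    apply ZMod.val_injective
    have hi := ZMod.val_lt i
    have hj := ZMod.val_lt j
    exact hw.getVert_injOn' (by simp; omega) (by simp; omega) hij
  · intro i
    have hi := ZMod.val_lt i
    have key := w.adj_getVert_succ (i := i.val) (by omega)
    by_cases h5 : i.val = 5
    · have e : (i + 1).val = 0 :=
        (by decide : ∀ i : ZMod 6, i.val = 5 → (i + 1).val = 0) i h5
      rw [h5] at key
      have e6 : w.getVert 6 = a := by rw [← hl]; exact w.getVert_length
      simpa [e, h5, e6] using key
    · have e : (i + 1).val = i.val + 1 :=
        (by decide : ∀ i : ZMod 6, ¬ i.val = 5 → (i + 1).val = i.val + 1) i h5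
      simpa only [e] using key

section

variable {c : ZMod 6 → V}

lemma Hex.rotate (hc : Hex G c) (k : ZMod 6) : Hex G (fun i => c (i + k)) :=
  ⟨fun i j h => by simpa using hc.inj h, fun i => by
    have := hc.adj (i + k)
    rwa [add_right_comm] at this⟩

/-- The six edges of the hexagon, listed from a base index `i`. -/
lemma Hex.edges (hc : Hex G c) (i : ZMod 6) :
    G.Adj (c i) (c (i + 1)) ∧ G.Adj (c (i + 1)) (c (i + 2)) ∧ G.Adj (c (i + 2)) (c (i + 3)) ∧
    G.Adj (c (i + 3)) (c (i + 4)) ∧ G.Adj (c (i + 4)) (c (i + 5)) ∧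
    G.Adj (c (i + 5)) (c i) := by
  have e : ∀ i : ZMod 6, i + 1 + 1 = i + 2 ∧ i + 2 + 1 = i + 3 ∧ i + 3 + 1 = i + 4 ∧
    i + 4 + 1 = i + 5 ∧ i + 5 + 1 = i := by decide
  obtain ⟨e1, e2, e3, e4, e5⟩ := e i
  refine ⟨hc.adj _, ?_, ?_, ?_, ?_, ?_⟩
  · simpa only [e1] using hc.adj (i + 1)
  · simpa only [e2] using hc.adj (i + 2)
  · simpa only [e3] using hc.adj (i + 3)
  · simpa only [e4] using hc.adj (i + 4)
  · simpa only [e5] using hc.adj (i + 5)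

lemma Hex.ne (hc : Hex G c) (i : ZMod 6) {k : ZMod 6} (hk : k ≠ 0) : c i ≠ c (i + k) := by
  intro h
  exact hk (left_eq_add.1 (hc.inj h))

lemma exists_offset (i j : ZMod 6) : j = i ∨ j = i + 1 ∨ j = i + 2 ∨ j = i + 3 ∨ j = i + 4 ∨
    j = i + 5 := by
  revert i j; decide

/-- `y` lies off the hexagon and is adjacent to its vertex of index `i`. -/
def Att (G : SimpleGraph V) (c : ZMod 6 → V) (i : ZMod 6) (y : V) : Prop :=
  (∀ j, y ≠ c j) ∧ G.Adj y (c i)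

/-- A vertex off the hexagon is attached to at most one of its vertices, for otherwise there is
a cycle of length at most 5. -/
lemma Att.index_unique (hG : NoShort G) (hc : Hex G c) {i j : ZMod 6} {y : V}
    (h1 : Att G c i y) (h2 : Att G c j y) : j = i := by
  obtain ⟨a0, a1, a2, a3, a4, a5⟩ := hc.edges i
  rcases exists_offset i j with rfl | rfl | rfl | rfl | rfl | rfl
  · rfl
  · exact (hG.no3 h1.2 a0 h2.2.symm).elim
  · exact (hG.no4 (h1.1 _) (hc.ne i (by decide)) h1.2 a0 a1 h2.2.symm).elim
  · exact (hG.no5 h1.2 a0 a1 a2 h2.2.symm).elim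
  · refine (hG.no4 (h1.1 (i + 5)) (hc.ne i (k := 4) (by decide)).symm h2.2 a4 a5 h1.2.symm).elim
  · exact (hG.no3 h2.2 a5 h1.2.symm).elim

lemma Hex.far_antipodal (hG : NoShort G) (hc : Hex G c) (i : ZMod 6) :
    (farGraph G).Adj (c i) (c (i + 3)) := by
  obtain ⟨a0, a1, a2, a3, a4, a5⟩ := hc.edges i
  refine ⟨hc.ne i (by decide), fun h => ?_, fun z h1 h2 => hG.no5 h1 h2 a2.symm a1.symm a0.symm⟩
  refine hG.no4 (hc.ne i (by decide)) ?_ a0 a1 a2 h.symm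
  exact fun h => absurd (hc.inj h) (by rw [add_right_inj]; decide)

lemma Att.far_two (hG : NoShort G) (hc : Hex G c) {i : ZMod 6} {y : V} (h : Att G c i y) :
    (farGraph G).Adj y (c (i + 2)) := by
  obtain ⟨a0, a1, a2, a3, a4, a5⟩ := hc.edges i
  exact ⟨h.1 _, fun h' => hG.no4 (h.1 _) (hc.ne i (by decide)) h.2 a0 a1 h'.symm,
    fun z h1 h2 => hG.no5 h1 h2 a1.symm a0.symm h.2.symm⟩

lemma Att.far_four (hG : NoShort G) (hc : Hex G c) {i : ZMod 6} {y : V} (h : Att G c i y) :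
    (farGraph G).Adj y (c (i + 4)) := by
  obtain ⟨a0, a1, a2, a3, a4, a5⟩ := hc.edges i
  exact ⟨h.1 _, fun h' => hG.no4 (h.1 _) (hc.ne i (by decide)) h.2 a5.symm a4.symm h'.symm,
    fun z h1 h2 => hG.no5 h1 h2 a4 a5 h.2.symm⟩

/-- At most one vertex is attached at each index: two of them would form a 4-cycle of the far
graph with the hexagon vertices of indices `i + 2` and `i + 4`. -/
lemma Att.unique (hG : NoShort G) (hF : NoShort (farGraph G)) (hc : Hex G c) {i : ZMod 6}
    {y y' : V} (h : Att G c i y) (h' : Att G c i y') : y = y' := by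
  by_contra hne
  refine hF.no4 hne ?_ (h.far_two hG hc) (h'.far_two hG hc).symm (h'.far_four hG hc)
    (h.far_four hG hc).symm
  exact fun h => absurd (hc.inj h) (by rw [add_right_inj]; decide)

/-- If an attached vertex is within distance 2 of the antipode of its attachment point, then the
connecting vertex is attached at that antipode. -/
lemma Att.exists_opposite (hG : NoShort G) (hc : Hex G c) {i : ZMod 6} {y : V}
    (h : Att G c i y) (hn : ¬ (farGraph G).Adj y (c (i + 3))) :
    ∃ z, Att G c (i + 3) z ∧ G.Adj y z := by
  have hnadj : ¬ G.Adj y (c (i + 3)) := fun h' =>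
    absurd (Att.index_unique hG hc h ⟨h.1, h'⟩) (by rw [add_eq_left]; decide)
  obtain ⟨z, h1, h2⟩ := exists_common hn (h.1 _) hnadj
  refine ⟨z, ⟨?_, h2⟩, h1⟩
  rintro j rfl
  obtain rfl := Att.index_unique hG hc h ⟨h.1, h1⟩
  exact (hc.far_antipodal hG _).2.1 h2

lemma Att.far_consecutive (hG : NoShort G) (hc : Hex G c) {i : ZMod 6} {y y' : V}
    (h : Att G c i y) (h' : Att G c (i + 1) y') : (farGraph G).Adj y y' := by
  have a0 := hc.adj i
  refine ⟨?_, fun a => hG.no4 (h.1 _) (h'.1 _) a h'.2 a0.symm h.2.symm,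
    fun z h1 h2 => hG.no5 h1 h2 h'.2 a0.symm h.2.symm⟩
  rintro rfl
  exact hG.no3 h.2 a0 h'.2.symm

/-- Vertices attached at consecutive indices force vertices attached at both antipodes, since the
far graph has no triangle. -/
lemma Att.consecutive (hG : NoShort G) (hF : NoShort (farGraph G)) (hc : Hex G c) {i : ZMod 6}
    {y y' : V} (h : Att G c i y) (h' : Att G c (i + 1) y') :
    (∃ z, Att G c (i + 3) z) ∧ ∃ z, Att G c (i + 4) z := by
  have hyy := h.far_consecutive hG hc h'
  have e : ∀ i : ZMod 6, i + 1 + 2 = i + 3 ∧ i + 1 + 3 = i + 4 := by decide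
  obtain ⟨e1, e2⟩ := e i
  constructor
  · have f := h'.far_two hG hc
    rw [e1] at f
    obtain ⟨z, hz, -⟩ := h.exists_opposite hG hc (fun f' => hF.no3 hyy f f'.symm)
    exact ⟨z, hz⟩
  · have f := h.far_four hG hc
    obtain ⟨z, hz, -⟩ := h'.exists_opposite hG hc (fun f' => hF.no3 hyy (e2 ▸ f') f.symm)
    exact ⟨z, e2 ▸ hz⟩

/-- Adjacent attached vertices are attached at antipodes. -/
lemma Att.adj_index (hG : NoShort G) (hc : Hex G c) {i j : ZMod 6} {y z : V}
    (h : Att G c i y) (h' : Att G c j z) (a : G.Adj y z) : j = i + 3 := by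
  obtain ⟨a0, a1, a2, a3, a4, a5⟩ := hc.edges i
  rcases exists_offset i j with rfl | rfl | rfl | rfl | rfl | rfl
  · exact (hG.no3 a h'.2 h.2.symm).elim
  · exact (hG.no4 (h.1 _) (h'.1 _) a h'.2 a0.symm h.2.symm).elim
  · exact (hG.no5 a h'.2 a1.symm a0.symm h.2.symm).elim
  · rfl
  · exact (hG.no5 a h'.2 a4 a5 h.2.symm).elim
  · exact (hG.no4 (h.1 _) (h'.1 _) a h'.2 a5 h.2.symm).elim

/-- `t` is neither on the hexagon nor adjacent to it. -/
def Remote (G : SimpleGraph V) (c : ZMod 6 → V) (t : V) : Prop :=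
  (∀ j, t ≠ c j) ∧ ∀ j, ¬ G.Adj t (c j)

/-- Vertices attached at indices differing by 2 have a common neighbour, because they are both far
from the hexagon vertex of index `i + 4`; that neighbour is remote. -/
lemma Att.exists_remote (hG : NoShort G) (hF : NoShort (farGraph G)) (hc : Hex G c) {i : ZMod 6}
    {y y' : V} (h : Att G c i y) (h' : Att G c (i + 2) y') : ∃ t, Remote G c t := by
  have e : ∀ i : ZMod 6, i + 2 + 2 = i + 4 ∧ i + 2 ≠ i ∧ i + 2 ≠ i + 3 ∧ i + 3 ≠ i + 2 + 3 := by
    decide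
  obtain ⟨e1, e2, e3, e4⟩ := e i
  have f := h'.far_two hG hc
  rw [e1] at f
  obtain ⟨t, h1, h2⟩ := exists_common (fun f' => hF.no3 f' f (h.far_four hG hc).symm)
    (fun hyy => e2 (Att.index_unique hG hc h (hyy ▸ h')))
    (fun a => e3 (h.adj_index hG hc h' a))
  have hoff : ∀ j, t ≠ c j := by
    rintro j rfl
    have j1 := Att.index_unique hG hc h ⟨h.1, h1⟩
    have j2 := Att.index_unique hG hc h' ⟨h'.1, h2.symm⟩
    exact e2 (j2.symm.trans j1)
  refine ⟨t, hoff, fun j a => ?_⟩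
  have j1 := h.adj_index hG hc ⟨hoff, a⟩ h1
  have j2 := h'.adj_index hG hc ⟨hoff, a⟩ h2.symm
  exact e4 (j1.symm.trans j2)

/-- A remote vertex is within distance 2 of one of any two antipodal hexagon vertices, as the far
graph has no triangle. -/
lemma Remote.exists_att (hF : NoShort (farGraph G)) (hG : NoShort G) (hc : Hex G c) {t : V}
    (ht : Remote G c t) (i : ZMod 6) :
    (∃ z, G.Adj t z ∧ Att G c i z) ∨ ∃ z, G.Adj t z ∧ Att G c (i + 3) z := by
  have key : ∀ j, ¬ (farGraph G).Adj t (c j) → ∃ z, G.Adj t z ∧ Att G c j z := by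
    intro j hj
    obtain ⟨z, h1, h2⟩ := exists_common hj (ht.1 j) (ht.2 j)
    exact ⟨z, h1, fun k hk => ht.2 k (hk ▸ h1), h2⟩
  by_cases h : (farGraph G).Adj t (c i)
  · exact Or.inr (key _ fun h' => hF.no3 h (hc.far_antipodal hG i) h'.symm)
  · exact Or.inl (key _ h)

lemma no_consecutive_of_common (hG : NoShort G) (hc : Hex G c) {t y z : V} {i j : ZMod 6}
    (hj : j = i + 1) (h1 : G.Adj t y ∧ Att G c i y) (h2 : G.Adj t z ∧ Att G c j z) : False := by
  subst hj
  exact hG.no5 h1.1 h1.2.2 (hc.adj i) h2.2.2.symm h2.1.symm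

/-- If every hexagon vertex has an attached vertex there are at least 12 vertices. -/
lemma card_of_all_att [Fintype V] (hG : NoShort G) (hc : Hex G c)
    (h : ∀ i, ∃ y, Att G c i y) : 12 ≤ Fintype.card V := by
  choose y hy using h
  have hinj : Function.Injective (Sum.elim c y) := by
    apply Function.Injective.sumElim hc.inj
    · intro i j hij
      exact Att.index_unique hG hc (hy j) (hij ▸ hy i)
    · intro i j h
      exact (hy j).1 i h.symm
  simpa [ZMod.card] using Fintype.card_le_of_injective _ hinj

/-- The configuration of a remote vertex joined to vertices attached at indices 0, 2, 4 is
impossible on at most 11 vertices. -/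
lemma remote_aux [Fintype V] (hcard : Fintype.card V ≤ 11) (hG : NoShort G)
    (hF : NoShort (farGraph G)) (hc : Hex G c) {t y0 y2 y4 : V} (ht : Remote G c t)
    (h0 : G.Adj t y0 ∧ Att G c 0 y0) (h2 : G.Adj t y2 ∧ Att G c 2 y2)
    (h4 : G.Adj t y4 ∧ Att G c 4 y4) : False := by
  have no3att : ∀ z, ¬ Att G c 3 z := by
    intro z hz
    obtain ⟨⟨z5, hz5⟩, -⟩ := Att.consecutive hG hF hc h2.2 hz
    obtain ⟨-, ⟨z1, hz1⟩⟩ := Att.consecutive hG hF hc hz h4.2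
    have : 12 ≤ Fintype.card V := by
      refine card_of_all_att hG hc fun i => ?_
      have hi : ∀ i : ZMod 6, i = 0 ∨ i = 1 ∨ i = 2 ∨ i = 3 ∨ i = 4 ∨ i = 5 := by decide
      rcases hi i with rfl | rfl | rfl | rfl | rfl | rfl
      exacts [⟨_, h0.2⟩, ⟨_, hz1⟩, ⟨_, h2.2⟩, ⟨_, hz⟩, ⟨_, h4.2⟩, ⟨_, hz5⟩]
    omega
  have far : ∀ j, (∀ z, G.Adj t z → ¬ Att G c j z) → (farGraph G).Adj t (c j) := fun j hj =>
    ⟨ht.1 j, ht.2 j, fun z h1 h2 => hj z h1 ⟨fun k hk => ht.2 k (hk ▸ h1), h2⟩⟩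
  have f3 := far 3 fun z _ hz => no3att z hz
  have f1 := far 1 fun z a hz =>
    no_consecutive_of_common hG hc (i := 0) (j := 1) (by decide) h0 ⟨a, hz⟩
  have g3 : (farGraph G).Adj y0 (c 3) := by
    by_contra hn
    obtain ⟨z, hz, -⟩ := h0.2.exists_opposite hG hc hn
    exact no3att z hz
  have g4 : (farGraph G).Adj y0 (c 4) := h0.2.far_four hG hc
  have g14 : (farGraph G).Adj (c 1) (c 4) := hc.far_antipodal hG 1
  exact hF.no5 f3 g3.symm g4 g14.symm f1.symm

lemma Att.rotate {i k : ZMod 6} {y : V} (h : Att G c (i + k) y) :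
    Att G (fun i => c (i + k)) i y := ⟨fun _ => h.1 _, h.2⟩

lemma no_remote [Fintype V] (hcard : Fintype.card V ≤ 11) (hG : NoShort G)
    (hF : NoShort (farGraph G)) (hc : Hex G c) (t : V) : ¬ Remote G c t := by
  intro ht
  have nc := fun {y z : V} {i j : ZMod 6} (hj : j = i + 1)
    (h1 : G.Adj t y ∧ Att G c i y) (h2 : G.Adj t z ∧ Att G c j z) =>
    no_consecutive_of_common hG hc hj h1 h2
  rcases ht.exists_att hF hG hc 0 with ⟨y0, h0⟩ | ⟨y0, h0⟩
  · rcases ht.exists_att hF hG hc 1 with ⟨y1, h1⟩ | ⟨y1, h1⟩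
    · exact nc (by decide) h0 h1
    rcases ht.exists_att hF hG hc 2 with ⟨y2, h2⟩ | ⟨y2, h2⟩
    · exact remote_aux hcard hG hF hc ht h0 h2 h1
    · exact nc (by decide) h1 h2
  · rcases ht.exists_att hF hG hc 1 with ⟨y1, h1⟩ | ⟨y1, h1⟩
    · rcases ht.exists_att hF hG hc 2 with ⟨y2, h2⟩ | ⟨y2, h2⟩
      · exact nc (by decide) h1 h2
      · refine remote_aux hcard hG hF (hc.rotate 1) (t := t) ⟨fun _ => ht.1 _, fun _ => ht.2 _⟩
          ⟨h1.1, Att.rotate (i := 0) ?_⟩ ⟨h0.1, Att.rotate (i := 2) ?_⟩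
          ⟨h2.1, Att.rotate (i := 4) ?_⟩
        exacts [h1.2, h0.2, h2.2]
    · exact nc (by decide) h0 h1

/-- On the hexagon, only the antipode of a vertex can be far from it. -/
lemma Hex.far_index (hc : Hex G c) {i j : ZMod 6} (h : (farGraph G).Adj (c i) (c j)) :
    j = i + 3 := by
  obtain ⟨a0, a1, a2, a3, a4, a5⟩ := hc.edges i
  rcases exists_offset i j with rfl | rfl | rfl | rfl | rfl | rfl
  · exact (h.1 rfl).elim
  · exact (h.2.1 a0).elim
  · exact (h.2.2 _ a0 a1).elim
  · rfl
  · exact (h.2.2 _ a5.symm a4.symm).elim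
  · exact (h.2.1 a5.symm).elim

/-- An isomorphism from the far graph to `G` cannot send a vertex with at most one far neighbour
to a vertex with two neighbours. -/
lemma two_far (f : farGraph G ≃g G) {x a b p : V} (hab : a ≠ b) (ha : G.Adj (f x) a)
    (hb : G.Adj (f x) b) (hx : ∀ y, (farGraph G).Adj x y → y = p) : False := by
  have key : ∀ a, G.Adj (f x) a → a = f p := by
    intro a ha
    have : (farGraph G).Adj x (f.symm a) := by
      rw [← f.map_adj_iff]; simpa using ha
    rw [← hx _ this]; simp
  exact hab ((key a ha).trans (key b hb).symm)

lemma Hex.two_nbrs (hc : Hex G c) (i : ZMod 6) :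
    ∃ a b, a ≠ b ∧ G.Adj (c i) a ∧ G.Adj (c i) b := by
  obtain ⟨a0, a1, a2, a3, a4, a5⟩ := hc.edges i
  exact ⟨_, _, fun h => absurd (hc.inj h) (by rw [add_right_inj]; decide), a0, a5.symm⟩

/-- The terminal case, in which every vertex off the hexagon is attached at index 0 or 3. -/
lemma terminal (hG : NoShort G) (f : farGraph G ≃g G) (hc : Hex G c)
    (hcov : ∀ x, (∃ i, x = c i) ∨ Att G c 0 x ∨ Att G c 3 x)
    (h30 : ∀ y, Att G c 3 y → ∃ y, Att G c 0 y) : False := by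
  have hF : NoShort (farGraph G) := hG.of_iso f
  by_cases h3 : ∃ y', Att G c 3 y'
  · obtain ⟨y', hy'⟩ := h3
    obtain ⟨y, hy⟩ := h30 y' hy'
    have cov : ∀ x, (∃ i, x = c i) ∨ x = y ∨ x = y' := by
      intro x
      rcases hcov x with h | h | h
      · exact Or.inl h
      · exact Or.inr (Or.inl (h.unique hG hF hc hy))
      · exact Or.inr (Or.inr (h.unique hG hF hc hy'))
    by_cases a : G.Adj y y'
    · -- every vertex has two neighbours, but `c 0` has a single far neighbour
      have two : ∀ x, ∃ a b, a ≠ b ∧ G.Adj x a ∧ G.Adj x b := by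
        intro x
        rcases cov x with ⟨i, rfl⟩ | rfl | rfl
        · exact hc.two_nbrs i
        · exact ⟨_, _, hy'.1 0, a, hy.2⟩
        · exact ⟨_, _, hy.1 3, a.symm, hy'.2⟩
      obtain ⟨p, q, hpq, hp, hq⟩ := two (f (c 0))
      refine two_far f hpq hp hq (p := c 3) fun z hz => ?_
      rcases cov z with ⟨i, rfl⟩ | rfl | rfl
      · rw [hc.far_index hz]; rfl
      · exact (hz.2.1 hy.2.symm).elim
      · exact (hz.2.2 _ hy.2.symm a).elim
    · -- `y`, `c 3`, `c 0`, `y'` is a 4-cycle of the far graph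
      have f1 : (farGraph G).Adj y (c 3) := by
        by_contra hn
        obtain ⟨z, hz, az⟩ := hy.exists_opposite hG hc hn
        exact a (Att.unique hG hF hc hz hy' ▸ az)
      have f2 : (farGraph G).Adj y' (c 0) := by
        by_contra hn
        obtain ⟨z, hz, az⟩ := hy'.exists_opposite hG hc hn
        exact a (Att.unique hG hF hc hz hy ▸ az).symm
      have f3 : (farGraph G).Adj (c 0) (c 3) := hc.far_antipodal hG 0
      have f4 : (farGraph G).Adj y y' := by
        refine ⟨?_, a, ?_⟩
        · rintro rfl
          exact absurd (Att.index_unique hG hc hy hy') (by decide)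
        · intro z h1 h2
          rcases cov z with ⟨i, rfl⟩ | rfl | rfl
          · have j1 := Att.index_unique hG hc hy ⟨hy.1, h1⟩
            have j2 := Att.index_unique hG hc hy' ⟨hy'.1, h2.symm⟩
            rw [j1] at j2
            exact absurd j2 (by decide)
          · exact h1.ne rfl
          · exact h2.ne rfl
      exact hF.no4 (hy.1 0) (hy'.1 3).symm f1 f3.symm f2.symm f4.symm
  · -- `c 1` and `c 5` have a single far neighbour, so both are sent off the hexagon
    have cov : ∀ x, (∃ i, x = c i) ∨ Att G c 0 x := by
      intro x
      rcases hcov x with h | h | h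
      · exact Or.inl h
      · exact Or.inr h
      · exact (h3 ⟨x, h⟩).elim
    have img : ∀ i, G.Adj (c 0) (c i) → Att G c 0 (f (c i)) := by
      intro i hi
      rcases cov (f (c i)) with ⟨k, hk⟩ | h
      · obtain ⟨p, q, hpq, hp, hq⟩ := hc.two_nbrs k
        rw [← hk] at hp hq
        refine (two_far f hpq hp hq (p := c (i + 3)) fun z hz => ?_).elim
        rcases cov z with ⟨j, rfl⟩ | hz0
        · rw [hc.far_index hz]
        · exact (hz.2.2 _ hi.symm hz0.2.symm).elim
      · exact h
    obtain ⟨a0, -, -, -, -, a5⟩ := hc.edges 0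
    have := (img _ a0).unique hG hF hc (img _ a5.symm)
    exact absurd (hc.inj (f.injective this)) (by decide)

lemma not_iso [Fintype V] (hcard : Fintype.card V ≤ 11) (hG : NoShort G) (hc : Hex G c)
    (f : farGraph G ≃g G) : False := by
  have hF : NoShort (farGraph G) := hG.of_iso f
  have nr := no_remote hcard hG hF hc
  have cov : ∀ x, (∃ i, x = c i) ∨ ∃ i, Att G c i x := by
    intro x
    by_contra! h
    exact nr x ⟨h.1, fun j a => h.2 j ⟨h.1, a⟩⟩
  have n2 : ∀ {i j y z}, j = i + 2 → Att G c i y → Att G c j z → False := by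
    rintro i j y z rfl h1 h2
    obtain ⟨t, ht⟩ := h1.exists_remote hG hF hc h2
    exact nr t ht
  have n1 : ∀ {i j y z}, j = i + 1 → Att G c i y → Att G c j z → False := by
    rintro i j y z rfl h1 h2
    obtain ⟨⟨w, hw⟩, -⟩ := h1.consecutive hG hF hc h2
    exact n2 (by ring) h2 hw
  by_cases h : ∃ k y, Att G c k y
  · obtain ⟨k, y, hy⟩ := h
    -- rotate so that the index of an attached vertex becomes 0
    have e : ∀ k : ZMod 6, k = k + 4 + 2 ∧ k = k + 5 + 1 ∧ 0 + k = k ∧ 3 + k = k + 3 := by decide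
    obtain ⟨e1, e2, e3, e4⟩ := e k
    have hy0 : Att G (fun i => c (i + k)) 0 y := Att.rotate (by rwa [e3])
    refine terminal hG f (hc.rotate k) (fun x => ?_) fun _ _ => ⟨y, hy0⟩
    rcases cov x with ⟨i, rfl⟩ | ⟨i, hx⟩
    · exact Or.inl ⟨i - k, by simp⟩
    · rcases exists_offset k i with rfl | rfl | rfl | rfl | rfl | rfl
      · exact Or.inr (Or.inl (Att.rotate (by rwa [e3])))
      · exact (n1 rfl hy hx).elim
      · exact (n2 rfl hy hx).elim
      · exact Or.inr (Or.inr (Att.rotate (by rwa [e4])))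
      · exact (n2 e1 hx hy).elim
      · exact (n1 e2 hx hy).elim
  · refine terminal hG f hc (fun x => ?_) fun y hy => (h ⟨_, y, hy⟩).elim
    rcases cov x with hx | ⟨i, hx⟩
    · exact Or.inl hx
    · exact (h ⟨_, _, hx⟩).elim

end

lemma farGraph_eq : farGraph G = G.squareᶜ := by
  ext x y
  simp only [farGraph, SimpleGraph.square, SimpleGraph.compl_adj, SimpleGraph.fromRel_adj]
  constructor
  · rintro ⟨h1, h2, h3⟩
    refine ⟨h1, ?_⟩
    rintro ⟨-, (h | ⟨z, a, b⟩) | (h | ⟨z, a, b⟩)⟩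
    exacts [h2 h, h3 z a b, h2 h.symm, h3 z b.symm a.symm]
  · rintro ⟨h1, h2⟩
    exact ⟨h1, fun h => h2 ⟨h1, Or.inl (Or.inl h)⟩,
      fun z a b => h2 ⟨h1, Or.inl (Or.inr ⟨z, a, b⟩)⟩⟩

/-- Complementing both sides turns an isomorphism `G² ≃ Gᶜ` into one from the far graph to `G`. -/
def farIso (f : G.square ≃g Gᶜ) : farGraph G ≃g G where
  toEquiv := f.toEquiv
  map_rel_iff' := by
    intro x y
    have h := f.map_adj_iff (v := x) (w := y)
    have hne : f x = f y ↔ x = y := f.injective.eq_iff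
    have hl : G.Adj (f x) (f y) → f x ≠ f y := fun a => a.ne
    rw [farGraph_eq, SimpleGraph.compl_adj, ← h, SimpleGraph.compl_adj]
    change G.Adj (f x) (f y) ↔ _
    tauto

end SqucoGirthSix

theorem no_squco_girth_six_le_eleven {V : Type*} [Fintype V] (G : SimpleGraph V)
    (hcard : Fintype.card V ≤ 11) (hg : G.egirth = 6) :
    ¬ Nonempty (G.square ≃g Gᶜ) := by
  rintro ⟨f⟩
  obtain ⟨c, hc⟩ := SqucoGirthSix.exists_hex hg
  exact SqucoGirthSix.not_iso hcard (SqucoGirthSix.noShort_of_egirth hg) hc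
    (SqucoGirthSix.farIso f)
end
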